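/- arXiv:2207.11424 — 2 statements merged into one kernel-verified Lean document; each statement's English description precedes it below -/
import Mathlib

section
/- Let N ≥ 3, α ∈ (0, N), and p ≥ (N+α)/(N−2). Then there is a constant C > 0 such that for every u ∈ D^{1,2}(G) the Sobolev-type inequality holds: ∑_{x∈G} (R_α ∗ |u|^p)(x)·|u(x)|^p ≤ C·‖u‖_{D^{1,2}}^{2p}. -/
open Filter Topology

noncomputable section

namespace Choquard

variable {G : Type*}

/-- The word metric on the Cayley graph of `(G, S)`: the least `k` such that
`y = x * s₁ * ⋯ * s_k` with each `sᵢ ∈ S`. -/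
def wordDist [Group G] (S : Finset G) (x y : G) : ℕ :=
  sInf {k : ℕ | ∃ l : List G, (∀ s ∈ l, s ∈ S) ∧ l.length = k ∧ y = x * l.prod}

/-- Convolution against a kernel: `(R ∗ f)(x) = ∑_{y ∈ G} R(x,y) f(y)`. -/
def conv (R : G → G → ℝ) (f : G → ℝ) (x : G) : ℝ := ∑' y, R x y * f y

/-- The `ℓ^q(G)` norm of `u`. -/
def lpNorm (q : ℝ) (u : G → ℝ) : ℝ := (∑' x, |u x| ^ q) ^ (1 / q)

/-- `u ∈ ℓ^q(G)`. -/
def Memlp (q : ℝ) (u : G → ℝ) : Prop := Summable fun x : G => |u x| ^ q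

/-- `|∇u(x)|_p^p = ∑_{y ∼ x} |u(y) − u(x)|^p`, where `y ∼ x` iff `y = x * s`, `s ∈ S`. -/
def gradP [Group G] (S : Finset G) (p : ℝ) (u : G → ℝ) (x : G) : ℝ :=
  ∑ s ∈ S, |u (x * s) - u x| ^ p

/-- The `D^{1,p}` norm `(∑_x ∑_{y ∼ x} |u(y) − u(x)|^p)^{1/p}`. -/
def D1Norm [Group G] (S : Finset G) (p : ℝ) (u : G → ℝ) : ℝ :=
  (∑' x, gradP S p u x) ^ (1 / p)

/-- `u ∈ D^{1,p}(G) = {u ∈ ℓ^{Np/(N−p)}(G) : ‖u‖_{D^{1,p}} < ∞}`. -/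
def MemD1p [Group G] (S : Finset G) (N : ℕ) (p : ℝ) (u : G → ℝ) : Prop :=
  Memlp ((N : ℝ) * p / ((N : ℝ) - p)) u ∧ Summable (gradP S p u)

/-- `|∇u(x)|₂² = ∑_{y ∼ x} (u(y) − u(x))²`. -/
def gradSq [Group G] (S : Finset G) (u : G → ℝ) (x : G) : ℝ :=
  ∑ s ∈ S, (u (x * s) - u x) ^ 2

/-- The `D^{1,2}` norm. -/
def D12Norm [Group G] (S : Finset G) (u : G → ℝ) : ℝ :=
  (∑' x, gradSq S u x) ^ ((1 : ℝ) / 2)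

/-- `u ∈ D^{1,2}(G) = {u ∈ ℓ^{2N/(N−2)}(G) : ‖u‖_{D^{1,2}} < ∞}`. -/
def MemD12 [Group G] (S : Finset G) (N : ℕ) (u : G → ℝ) : Prop :=
  Memlp (2 * (N : ℝ) / ((N : ℝ) - 2)) u ∧ Summable (gradSq S u)

/-- The graph Laplacian `Δu(x) = ∑_{y ∼ x} (u(y) − u(x))`. -/
def lap [Group G] (S : Finset G) (u : G → ℝ) (x : G) : ℝ :=
  ∑ s ∈ S, (u (x * s) - u x)

/-- `u ∈ D^{2,2}(G) = {u ∈ ℓ^{2N/(N−4)}(G) : ‖Δu‖_{ℓ²} < ∞}`. -/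
def MemD22 [Group G] (S : Finset G) (N : ℕ) (u : G → ℝ) : Prop :=
  Memlp (2 * (N : ℝ) / ((N : ℝ) - 4)) u ∧ Summable fun x => (lap S u x) ^ 2

/-- `u ∈ D^{2,p}(G) = {u ∈ ℓ^{Np/(N−2p)}(G) : ‖Δu‖_{ℓ^p} < ∞}`. -/
def MemD2p [Group G] (S : Finset G) (N : ℕ) (p : ℝ) (u : G → ℝ) : Prop :=
  Memlp ((N : ℝ) * p / ((N : ℝ) - 2 * p)) u ∧ Summable fun x => |lap S u x| ^ p

/-- The nonlocal energy `∑_{x ∈ G} (R_α ∗ |u|^p)(x) |u(x)|^p`. -/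
def energy (R : G → G → ℝ) (p : ℝ) (u : G → ℝ) : ℝ :=
  ∑' x, conv R (fun y => |u y| ^ p) x * |u x| ^ p

/-- The optimal constant `K` of the Sobolev-type inequality. -/
def bestK [Group G] (S : Finset G) (N : ℕ) (R : G → G → ℝ) (p : ℝ) : ℝ :=
  sSup {t : ℝ | ∃ u : G → ℝ, MemD12 S N u ∧ D12Norm S u = 1 ∧ t = energy R p u}

/-- The discrete `p`-Laplacian. -/
def pLap [Group G] (S : Finset G) (p : ℝ) (u : G → ℝ) (x : G) : ℝ :=
  ∑ s ∈ S, |u (x * s) - u x| ^ (p - 2) * (u (x * s) - u x)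

/-- The cutoff `Ψ_r`, the indicator of `{x : d(x,e) ≥ r + 1}`. -/
def cutoff [Group G] (S : Finset G) (r : ℕ) (x : G) : ℝ :=
  if r + 1 ≤ wordDist S 1 x then 1 else 0

/-- Hölder inequality for `ENNReal`-valued series. -/
theorem tsum_holder [Countable G] {r q : ℝ} (h : r.HolderConjugate q) (f g : G → ENNReal) :
    ∑' x, f x * g x ≤ (∑' x, f x ^ r) ^ (1 / r) * (∑' x, g x ^ q) ^ (1 / q) := by
  let : MeasurableSpace G := ⊤
  have := ENNReal.lintegral_mul_le_Lp_mul_Lq (MeasureTheory.Measure.count (α := G)) h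
    (f := f) (g := g) (measurable_from_top.aemeasurable) (measurable_from_top.aemeasurable)
  simpa [MeasureTheory.lintegral_count] using this

theorem ofReal_tsum_le (f : G → ℝ) (hf : ∀ x, 0 ≤ f x) :
    ENNReal.ofReal (∑' x, f x) ≤ ∑' x, ENNReal.ofReal (f x) := by
  by_cases h : Summable f
  · rw [ENNReal.ofReal_tsum_of_nonneg hf h]
  · simp [tsum_eq_zero_of_not_summable h]

theorem ball_count (w : G → ℕ) (N : ℕ) (C₂ : ℝ) (hC₂ : 0 < C₂)
    (hfin : ∀ n : ℕ, 1 ≤ n → Finite {x : G // w x ≤ n})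
    (hV : ∀ n : ℕ, 1 ≤ n → (Nat.card {x : G // w x ≤ n} : ℝ) ≤ C₂ * (n : ℝ) ^ N)
    (ρ : ℝ) (hρ : 1 ≤ ρ) :
    ∑' g, (if (w g : ℝ) ≤ ρ then (1 : ENNReal) else 0) ≤ ENNReal.ofReal (C₂ * ρ ^ N) := by
  classical
  have h1 : 1 ≤ ⌊ρ⌋₊ := Nat.one_le_floor_iff _ |>.2 hρ
  have hle : (⌊ρ⌋₊ : ℝ) ≤ ρ := Nat.floor_le (by linarith)
  have := hfin _ h1
  have : Fintype {x : G // w x ≤ ⌊ρ⌋₊} := Fintype.ofFinite _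
  have e : ∑' g, (if (w g : ℝ) ≤ ρ then (1 : ENNReal) else 0)
      = ∑' g : {x : G // w x ≤ ⌊ρ⌋₊}, (1 : ENNReal) := by
    have := tsum_subtype {x : G | w x ≤ ⌊ρ⌋₊} (fun _ => (1 : ENNReal))
    refine Eq.trans ?_ this.symm
    refine tsum_congr fun g => ?_
    simp [Set.indicator, Nat.le_floor_iff (show 0 ≤ ρ by linarith)]
  rw [e, tsum_fintype]
  have h2 := hV _ h1
  simp only [Finset.sum_const, Finset.card_univ, nsmul_eq_mul, mul_one]
  rw [Nat.card_eq_fintype_card] at h2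
  rw [← ENNReal.ofReal_natCast]
  apply ENNReal.ofReal_le_ofReal
  refine h2.trans ?_
  gcongr

theorem geom_bound (A q : ℝ) (hA : 0 ≤ A) (hq0 : 0 ≤ q) (hq : q < 1) :
    ∑' k : ℕ, ENNReal.ofReal (A * q ^ k) = ENNReal.ofReal (A * (1 - q)⁻¹) := by
  rw [← ENNReal.ofReal_tsum_of_nonneg (fun k => by positivity)
    ((summable_geometric_of_lt_one hq0 hq).mul_left A), tsum_mul_left,
    tsum_geometric_of_lt_one hq0 hq]

/-- Sum of the kernel near the origin. -/
theorem near_sum (w : G → ℕ) (N : ℕ) (C₂ : ℝ) (hC₂ : 0 < C₂)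
    (hV : ∀ ρ : ℝ, 1 ≤ ρ →
      ∑' g, (if (w g : ℝ) ≤ ρ then (1 : ENNReal) else 0) ≤ ENNReal.ofReal (C₂ * ρ ^ N))
    (α : ℝ) (hα : 0 < α) (hαN : α < N) :
    ∃ C : ℝ, 0 < C ∧ ∀ ρ : ℝ, 1 ≤ ρ →
      ∑' g, (if 0 < w g ∧ (w g : ℝ) ≤ ρ then ENNReal.ofReal ((w g : ℝ) ^ (α - N)) else 0)
        ≤ ENNReal.ofReal (C * ρ ^ α) := by
  set q : ℝ := (1 / 2 : ℝ) ^ α with hq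
  have hq0 : 0 < q := by positivity
  have hq1 : q < 1 := Real.rpow_lt_one (by norm_num) (by norm_num) hα
  have h1q : 0 < 1 - q := by linarith
  refine ⟨C₂ * 2 ^ (N - α) * (1 - q)⁻¹, by positivity, fun ρ hρ => ?_⟩
  have hρ0 : 0 < ρ := by linarith
  have key : ∀ g, (if 0 < w g ∧ (w g : ℝ) ≤ ρ then ENNReal.ofReal ((w g : ℝ) ^ (α - N)) else 0)
      ≤ ∑' k : ℕ, (if 0 < w g ∧ (w g : ℝ) ≤ ρ / 2 ^ k then
          ENNReal.ofReal ((ρ / 2 ^ (k + 1)) ^ (α - N)) else 0) := by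
    intro g
    split_ifs with h
    · have hw : (0 : ℝ) < w g := by exact_mod_cast h.1
      obtain ⟨k, hk1, hk2⟩ := exists_nat_pow_near (x := ρ / w g) (y := (2 : ℝ))
        ((one_le_div hw).2 h.2) (by norm_num)
      refine le_trans ?_ (ENNReal.le_tsum k)
      rw [if_pos]
      · apply ENNReal.ofReal_le_ofReal
        apply Real.rpow_le_rpow_of_nonpos (by positivity) _ (by linarith)
        rw [div_lt_iff₀ hw] at hk2
        rw [div_le_iff₀ (by positivity)]
        linarith
      · refine ⟨h.1, ?_⟩
        rw [le_div_iff₀ hw] at hk1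
        rw [le_div_iff₀ (by positivity)]
        linarith
    · simp
  refine (ENNReal.tsum_le_tsum key).trans ?_
  rw [ENNReal.tsum_comm]
  have hb : ∀ k : ℕ, ∑' g, (if 0 < w g ∧ (w g : ℝ) ≤ ρ / 2 ^ k then
          ENNReal.ofReal ((ρ / 2 ^ (k + 1)) ^ (α - N)) else 0)
      ≤ ENNReal.ofReal ((C₂ * 2 ^ (N - α) * ρ ^ α) * q ^ k) := by
    intro k
    by_cases hk : 1 ≤ ρ / 2 ^ k
    · calc _ ≤ ∑' g, ENNReal.ofReal ((ρ / 2 ^ (k + 1)) ^ (α - N)) *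
            (if (w g : ℝ) ≤ ρ / 2 ^ k then (1 : ENNReal) else 0) := by
            refine ENNReal.tsum_le_tsum fun g => ?_
            by_cases h2 : (w g : ℝ) ≤ ρ / 2 ^ k
            · simp only [h2, and_true, if_true, mul_one]
              split_ifs <;> simp
            · simp [h2]
        _ ≤ ENNReal.ofReal ((ρ / 2 ^ (k + 1)) ^ (α - N)) * ENNReal.ofReal (C₂ * (ρ / 2 ^ k) ^ N) := by
            rw [ENNReal.tsum_mul_left]
            gcongr
            exact hV _ hk
        _ = _ := by
            rw [← ENNReal.ofReal_mul (by positivity)]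
            congr 1
            have e1 : ρ / 2 ^ (k + 1) = (ρ / 2 ^ k) * (1 / 2) := by
              rw [pow_succ]; field_simp
            have e2 : ρ / 2 ^ k = ρ * (1 / 2) ^ k := by
              rw [one_div, inv_pow]; rfl
            rw [e1, Real.mul_rpow (by positivity) (by norm_num), ← Real.rpow_natCast _ N]
            have e3 : (1 / 2 : ℝ) ^ (α - N) = 2 ^ ((N : ℝ) - α) := by
              rw [one_div, Real.inv_rpow (by norm_num), ← Real.rpow_neg (by norm_num)]; congr 1; ring
            have e4 : (ρ / 2 ^ k) ^ (α - N) * (ρ / 2 ^ k) ^ (N : ℝ) = ρ ^ α * q ^ k := by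
              rw [← Real.rpow_add (by positivity), sub_add_cancel, e2,
                Real.mul_rpow (by positivity) (by positivity), hq, ← Real.rpow_natCast,
                ← Real.rpow_natCast, ← Real.rpow_mul (by norm_num), ← Real.rpow_mul (by norm_num),
                mul_comm α]
            rw [e3]
            linear_combination (2 ^ ((N : ℝ) - α)) * C₂ * e4
    · refine le_trans (le_of_eq ?_) (zero_le)
      rw [ENNReal.tsum_eq_zero]
      intro g
      rw [if_neg]
      rintro ⟨h1, h2⟩
      have : (1 : ℝ) ≤ w g := by exact_mod_cast h1
      linarith
  refine (ENNReal.tsum_le_tsum hb).trans ?_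
  rw [geom_bound _ _ (by positivity) hq0.le hq1]
  apply ENNReal.ofReal_le_ofReal
  apply le_of_eq; ring

/-- Tail sum of the kernel. -/
theorem far_sum (w : G → ℕ) (N : ℕ) (hN : 1 ≤ N) (C₂ : ℝ) (hC₂ : 0 < C₂)
    (hV : ∀ ρ : ℝ, 1 ≤ ρ →
      ∑' g, (if (w g : ℝ) ≤ ρ then (1 : ENNReal) else 0) ≤ ENNReal.ofReal (C₂ * ρ ^ N)) :
    ∃ C : ℝ, 0 < C ∧ ∀ ρ : ℝ, 1 ≤ ρ →
      ∑' g, (if ρ < (w g : ℝ) then ENNReal.ofReal ((w g : ℝ) ^ (-(2 * N : ℝ))) else 0)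
        ≤ ENNReal.ofReal (C * ρ ^ (-(N : ℝ))) := by
  set q : ℝ := (1 / 2 : ℝ) ^ N with hq
  have hq0 : 0 < q := by positivity
  have hq1 : q < 1 := pow_lt_one₀ (by norm_num) (by norm_num) (by omega)
  have h1q : 0 < 1 - q := by linarith
  refine ⟨C₂ * 2 ^ N * (1 - q)⁻¹, by positivity, fun ρ hρ => ?_⟩
  have hρ0 : 0 < ρ := by linarith
  have key : ∀ g, (if ρ < (w g : ℝ) then ENNReal.ofReal ((w g : ℝ) ^ (-(2 * N : ℝ))) else 0)
      ≤ ∑' k : ℕ, ENNReal.ofReal ((ρ * 2 ^ k) ^ (-(2 * N : ℝ))) *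
          (if (w g : ℝ) ≤ ρ * 2 ^ (k + 1) then 1 else 0) := by
    intro g
    split_ifs with h
    · obtain ⟨k, hk1, hk2⟩ := exists_nat_pow_near (x := w g / ρ) (y := (2 : ℝ))
        ((one_le_div hρ0).2 h.le) (by norm_num)
      refine le_trans ?_ (ENNReal.le_tsum k)
      rw [le_div_iff₀ hρ0] at hk1
      rw [div_lt_iff₀ hρ0] at hk2
      rw [if_pos (by linarith), mul_one]
      apply ENNReal.ofReal_le_ofReal
      apply Real.rpow_le_rpow_of_nonpos (by positivity) (by linarith)
      have : (0 : ℝ) ≤ N := by positivity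
      linarith
    · simp
  refine (ENNReal.tsum_le_tsum key).trans ?_
  rw [ENNReal.tsum_comm]
  have hb : ∀ k : ℕ, ∑' g, ENNReal.ofReal ((ρ * 2 ^ k) ^ (-(2 * N : ℝ))) *
          (if (w g : ℝ) ≤ ρ * 2 ^ (k + 1) then (1 : ENNReal) else 0)
      ≤ ENNReal.ofReal ((C₂ * 2 ^ N * ρ ^ (-(N : ℝ))) * q ^ k) := by
    intro k
    rw [ENNReal.tsum_mul_left]
    have h1 : 1 ≤ ρ * 2 ^ (k + 1) := by
      have : (1 : ℝ) ≤ 2 ^ (k + 1) := one_le_pow₀ (by norm_num)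
      nlinarith
    refine (mul_le_mul_right (hV _ h1) _).trans ?_
    rw [← ENNReal.ofReal_mul (by positivity)]
    apply ENNReal.ofReal_le_ofReal
    apply le_of_eq
    have e : (ρ * 2 ^ k) ^ (-(2 * N : ℝ)) = ((ρ * 2 ^ k) ^ N)⁻¹ * ((ρ * 2 ^ k) ^ N)⁻¹ := by
      rw [Real.rpow_neg (by positivity), two_mul, Real.rpow_add (by positivity), Real.rpow_natCast,
        mul_inv]
    rw [e, Real.rpow_neg (by positivity), Real.rpow_natCast, hq, ← pow_mul, mul_comm N k, pow_mul,
      one_div, pow_succ]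
    simp only [mul_pow, inv_pow]
    field_simp
  refine (ENNReal.tsum_le_tsum hb).trans ?_
  rw [geom_bound _ _ (by positivity) hq0.le hq1]
  apply ENNReal.ofReal_le_ofReal
  apply le_of_eq; ring

/-- Normalised Hardy, Littlewood and Sobolev inequality. -/
theorem hls [Group G] [Countable G] (w : G → ℕ) (N : ℕ) (hN : 1 ≤ N) (C₂ : ℝ) (hC₂ : 0 < C₂)
    (hw : ∀ g, w g = 0 → g = 1)
    (hV : ∀ ρ : ℝ, 1 ≤ ρ →
      ∑' g, (if (w g : ℝ) ≤ ρ then (1 : ENNReal) else 0) ≤ ENNReal.ofReal (C₂ * ρ ^ N))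
    (α : ℝ) (hα : 0 < α) (hαN : α < N)
    (R : G → G → ℝ)
    (hR_symm : ∀ x y, R x y = R y x)
    (c₂ : ℝ) (hc₂ : 0 < c₂)
    (hR_up : ∀ x y : G, x ≠ y → R x y ≤ c₂ * (w (x⁻¹ * y) : ℝ) ^ (α - (N : ℝ)))
    (hR_diag : ∀ x : G, R x x ≤ c₂) :
    ∃ C : ℝ, 0 < C ∧ ∀ f : G → ℝ, (∀ x, 0 ≤ f x) →
      ∑' x, ENNReal.ofReal (f x ^ (2 * N / (N + α))) ≤ 1 →
      ∑' x, ∑' y, ENNReal.ofReal (R x y * f y * f x) ≤ ENNReal.ofReal C := by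
  classical
  obtain ⟨A, hA, hnear⟩ := near_sum w N C₂ hC₂ hV α hα hαN
  obtain ⟨B, hB, hfar⟩ := far_sum w N hN C₂ hC₂ hV
  have hN0 : (0 : ℝ) < N := by linarith
  have hNa : (0 : ℝ) < N + α := by linarith
  have hNm : (0 : ℝ) < N - α := by linarith
  set r : ℝ := 2 * N / (N + α) with hr
  set q : ℝ := 2 * N / (N - α) with hq
  have hr0 : 0 < r := by positivity
  have hq0 : 0 < q := by positivity
  have hrq : r.HolderConjugate q := by
    rw [Real.holderConjugate_iff]
    refine ⟨?_, ?_⟩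
    · rw [hr, lt_div_iff₀ hNa]; linarith
    · rw [hr, hq]; field_simp; ring
  have hBq : 0 < B ^ (1 / q) := by positivity
  refine ⟨2 * (c₂ * (1 + A + B ^ (1 / q))), by positivity, fun f hf hsum => ?_⟩
  have hf1 : ∀ x, f x ≤ 1 := by
    intro x
    by_contra hlt
    push Not at hlt
    have h1 := (ENNReal.le_tsum (f := fun x => ENNReal.ofReal (f x ^ r)) x).trans hsum
    have h2 : 1 < f x ^ r := Real.one_lt_rpow hlt hr0
    rw [ENNReal.ofReal_le_one] at h1
    linarith
  -- pointwise estimate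
  have hpt : ∀ x, 0 < f x → ∑' y, (if f y ≤ f x then ENNReal.ofReal (R x y * f y) else 0)
      ≤ ENNReal.ofReal (c₂ * (1 + A + B ^ (1 / q)) * f x ^ (r - 1)) := by
    intro x hx
    set t := f x with ht
    set ρ : ℝ := t ^ (-(2 / (N + α))) with hρ
    have hρ1 : 1 ≤ ρ := by
      apply Real.one_le_rpow_of_pos_of_le_one_of_nonpos hx (hf1 x)
      have : 0 < 2 / (N + α) := by positivity
      linarith
    have hρ0 : 0 < ρ := by linarith
    have hts : t ≤ t ^ (r - 1) := by
      have := Real.rpow_le_rpow_of_exponent_ge hx (hf1 x) (y := 1) (z := r - 1) (by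
        rw [hr, sub_le_iff_le_add, div_le_iff₀ hNa]; linarith)
      simpa using this
    have hts2 : t * ρ ^ α = t ^ (r - 1) := by
      rw [hρ, ← Real.rpow_mul hx.le]
      nth_rewrite 1 [← Real.rpow_one t]
      rw [← Real.rpow_add hx]
      congr 1
      rw [hr]; field_simp; ring
    have hts3 : (ρ ^ (-(N : ℝ))) ^ (1 / q) = t ^ (r - 1) := by
      rw [hρ, ← Real.rpow_mul hx.le, ← Real.rpow_mul hx.le]
      congr 1
      rw [hr, hq]; field_simp; ring
    let k1 : G → ENNReal := fun g =>
      if 0 < w g ∧ (w g : ℝ) ≤ ρ then ENNReal.ofReal ((w g : ℝ) ^ (α - N)) else 0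
    let k2 : G → ENNReal := fun g =>
      if ρ < (w g : ℝ) then ENNReal.ofReal ((w g : ℝ) ^ (α - N)) else 0
    have hsplit : ∀ y, (if f y ≤ t then ENNReal.ofReal (R x y * f y) else 0) ≤
        ENNReal.ofReal c₂ * ((if y = x then ENNReal.ofReal t else 0)
          + (ENNReal.ofReal t * k1 (x⁻¹ * y) + k2 (x⁻¹ * y) * ENNReal.ofReal (f y))) := by
      intro y
      split_ifs with h1 h2 h2
      · subst h2
        refine le_trans ?_ (mul_le_mul_right le_self_add _)
        rw [← ENNReal.ofReal_mul hc₂.le]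
        apply ENNReal.ofReal_le_ofReal
        exact mul_le_mul_of_nonneg_right (hR_diag _) (hf _)
      · rw [zero_add]
        have hup := hR_up x y (Ne.symm h2)
        have hwpos : 0 < w (x⁻¹ * y) := by
          rw [Nat.pos_iff_ne_zero]
          intro h0
          have := hw _ h0
          exact h2 (inv_mul_eq_one.1 this).symm
        have hwpos' : (0 : ℝ) < w (x⁻¹ * y) := by exact_mod_cast hwpos
        have hbase : ENNReal.ofReal (R x y * f y) ≤ ENNReal.ofReal c₂ *
            (ENNReal.ofReal ((w (x⁻¹ * y) : ℝ) ^ (α - N)) * ENNReal.ofReal (f y)) := by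
          rw [← ENNReal.ofReal_mul (by positivity), ← ENNReal.ofReal_mul hc₂.le]
          apply ENNReal.ofReal_le_ofReal
          rw [← mul_assoc]
          exact mul_le_mul_of_nonneg_right hup (hf _)
        refine hbase.trans (mul_le_mul_right ?_ _)
        by_cases h3 : (w (x⁻¹ * y) : ℝ) ≤ ρ
        · refine le_trans ?_ le_self_add
          simp only [k1, hwpos, h3, and_self, if_true]
          rw [mul_comm]
          gcongr
        · refine le_trans ?_ le_add_self
          simp only [k2, not_le.1 h3, if_true]
          exact le_rfl
      · simp
      · simp
    refine (ENNReal.tsum_le_tsum hsplit).trans ?_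
    rw [ENNReal.tsum_mul_left, ENNReal.tsum_add, ENNReal.tsum_add, tsum_ite_eq,
      ENNReal.tsum_mul_left]
    have b1 : ∑' y, k1 (x⁻¹ * y) ≤ ENNReal.ofReal (A * ρ ^ α) := by
      refine le_trans (le_of_eq ((Equiv.mulLeft x⁻¹).tsum_eq k1)) ?_
      exact hnear ρ hρ1
    have b2 : ∑' y, k2 (x⁻¹ * y) * ENNReal.ofReal (f y) ≤
        ENNReal.ofReal (B ^ (1 / q) * t ^ (r - 1)) := by
      refine (tsum_holder hrq.symm _ _).trans ?_
      have e1 : ∑' y, ENNReal.ofReal (f y) ^ r ≤ 1 := by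
        refine le_trans (le_of_eq ?_) hsum
        exact tsum_congr fun y => ENNReal.ofReal_rpow_of_nonneg (hf y) hr0.le
      have e2 : ∑' y, k2 (x⁻¹ * y) ^ q ≤ ENNReal.ofReal (B * ρ ^ (-(N : ℝ))) := by
        refine le_trans (le_of_eq ((Equiv.mulLeft x⁻¹).tsum_eq (fun g => k2 g ^ q))) ?_
        refine le_trans (le_of_eq ?_) (hfar ρ hρ1)
        refine tsum_congr fun g => ?_
        simp only [k2]
        split_ifs with h
        · rw [ENNReal.ofReal_rpow_of_nonneg (by positivity) hq0.le, ← Real.rpow_mul (by positivity)]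
          congr 2
          rw [hq]; field_simp; ring
        · exact ENNReal.zero_rpow_of_pos hq0
      calc _ ≤ ENNReal.ofReal (B * ρ ^ (-(N : ℝ))) ^ (1 / q) * 1 ^ (1 / r) := by
            gcongr
        _ = _ := by
            rw [ENNReal.one_rpow, mul_one, ENNReal.ofReal_rpow_of_nonneg (by positivity)
              (by positivity), Real.mul_rpow hB.le (by positivity), hts3]
    have htp : 0 < t ^ (r - 1) := by positivity
    calc _ ≤ ENNReal.ofReal c₂ * (ENNReal.ofReal t + (ENNReal.ofReal t * ENNReal.ofReal (A * ρ ^ α)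
            + ENNReal.ofReal (B ^ (1 / q) * t ^ (r - 1)))) := by
          gcongr
      _ = ENNReal.ofReal (c₂ * (t + (t * (A * ρ ^ α) + B ^ (1 / q) * t ^ (r - 1)))) := by
          rw [← ENNReal.ofReal_mul hx.le, ← ENNReal.ofReal_add (by positivity) (by positivity),
            ← ENNReal.ofReal_add hx.le (by positivity), ← ENNReal.ofReal_mul hc₂.le]
      _ ≤ _ := by
          apply ENNReal.ofReal_le_ofReal
          rw [mul_assoc]
          apply mul_le_mul_of_nonneg_left _ hc₂.le
          have : t * (A * ρ ^ α) = A * t ^ (r - 1) := by rw [← hts2]; ring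
          rw [this]
          linarith
  -- half of the double sum
  set K := c₂ * (1 + A + B ^ (1 / q)) with hK
  have hK0 : 0 < K := by positivity
  have hhalf : ∑' x, ∑' y, (if f y ≤ f x then ENNReal.ofReal (R x y * f y * f x) else 0)
      ≤ ENNReal.ofReal K := by
    calc _ ≤ ∑' x, ENNReal.ofReal K * ENNReal.ofReal (f x ^ r) := by
          refine ENNReal.tsum_le_tsum fun x => ?_
          rcases (hf x).eq_or_lt with h0 | h0
          · simp [← h0]
          calc _ = ∑' y, (if f y ≤ f x then ENNReal.ofReal (R x y * f y) else 0)
                  * ENNReal.ofReal (f x) := by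
                refine tsum_congr fun y => ?_
                split_ifs
                · rw [ENNReal.ofReal_mul' h0.le]
                · simp
            _ ≤ ENNReal.ofReal (K * f x ^ (r - 1)) * ENNReal.ofReal (f x) := by
                rw [ENNReal.tsum_mul_right]
                gcongr
                exact hpt x h0
            _ = _ := by
                rw [← ENNReal.ofReal_mul (by positivity), ← ENNReal.ofReal_mul (by positivity),
                  mul_assoc, Real.rpow_sub_one h0.ne', div_mul_cancel₀ _ h0.ne']
      _ ≤ ENNReal.ofReal K * 1 := by
          rw [ENNReal.tsum_mul_left]
          gcongr
      _ = _ := mul_one _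
  calc _ ≤ ∑' x, ∑' y, ((if f y ≤ f x then ENNReal.ofReal (R x y * f y * f x) else 0)
          + (if f x ≤ f y then ENNReal.ofReal (R y x * f x * f y) else 0)) := by
        refine ENNReal.tsum_le_tsum fun x => ENNReal.tsum_le_tsum fun y => ?_
        rcases le_total (f y) (f x) with h | h
        · rw [if_pos h]; exact le_self_add
        · rw [if_pos h, hR_symm y x, mul_right_comm]; exact le_add_self
    _ = ∑' x, ∑' y, (if f y ≤ f x then ENNReal.ofReal (R x y * f y * f x) else 0)
        + ∑' x, ∑' y, (if f y ≤ f x then ENNReal.ofReal (R x y * f y * f x) else 0) := by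
        simp only [ENNReal.tsum_add]
        congr 1
        exact ENNReal.tsum_comm
    _ ≤ ENNReal.ofReal K + ENNReal.ofReal K := add_le_add hhalf hhalf
    _ = _ := by rw [← ENNReal.ofReal_add hK0.le hK0.le, two_mul]

open Classical in
/-- Number of points of `A` which leave `A` after right translation by `g`. -/
def exitCount [Group G] (A : Set G) (g : G) : ENNReal :=
  ∑' x, if x ∈ A ∧ x * g ∉ A then 1 else 0

theorem exitCount_one [Group G] (A : Set G) : exitCount A 1 = 0 := by
  simp [exitCount]

theorem exitCount_mul [Group G] (A : Set G) (g h : G) :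
    exitCount A (g * h) ≤ exitCount A g + exitCount A h := by
  classical
  have e : exitCount A h = ∑' x, if x * g ∈ A ∧ x * g * h ∉ A then (1 : ENNReal) else 0 :=
    ((Equiv.mulRight g).tsum_eq
      (fun x => if x ∈ A ∧ x * h ∉ A then (1 : ENNReal) else 0)).symm
  rw [e]
  unfold exitCount
  rw [← ENNReal.tsum_add]
  refine ENNReal.tsum_le_tsum fun x => ?_
  rw [← mul_assoc]
  by_cases h1 : x ∈ A <;> by_cases h2 : x * g ∈ A <;> by_cases h3 : x * g * h ∈ A <;>
    simp [h1, h2, h3]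

theorem exitCount_list [Group G] (S : Finset G) (A : Set G) (l : List G) (hl : ∀ s ∈ l, s ∈ S) :
    exitCount A l.prod ≤ l.length * ∑ s ∈ S, exitCount A s := by
  induction l with
  | nil => simp [exitCount_one]
  | cons a l ih =>
    rw [List.prod_cons]
    refine (exitCount_mul A a l.prod).trans ?_
    have h1 : exitCount A a ≤ ∑ s ∈ S, exitCount A s :=
      Finset.single_le_sum (f := exitCount A) (fun _ _ => zero_le) (hl a (by simp))
    have h2 := ih (fun s hs => hl s (by simp [hs]))
    rw [List.length_cons, Nat.cast_add, Nat.cast_one, add_mul, one_mul, add_comm]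
    exact add_le_add h2 h1

open Classical in
theorem isoper [Group G] (S : Finset G) (A : Set G) (n : ℕ) (b : Finset G)
    (hb : ∀ g ∈ b, ∃ l : List G, (∀ s ∈ l, s ∈ S) ∧ l.length ≤ n ∧ g = l.prod)
    (hF : ∑' x, (if x ∈ A then (1 : ENNReal) else 0) ≠ ⊤) (hb0 : 0 < b.card)
    (h2 : 2 * ∑' x, (if x ∈ A then (1 : ENNReal) else 0) ≤ b.card) :
    ∑' x, (if x ∈ A then (1 : ENNReal) else 0) ≤ 2 * (n * ∑ s ∈ S, exitCount A s) := by
  set F := ∑' x, (if x ∈ A then (1 : ENNReal) else 0) with hFd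
  set P := ∑ s ∈ S, exitCount A s with hP
  have hg : ∀ g ∈ b, F ≤ n * P + ∑' x, (if x ∈ A ∧ x * g ∈ A then (1 : ENNReal) else 0) := by
    intro g hgb
    obtain ⟨l, hl, hln, rfl⟩ := hb g hgb
    have h1 : exitCount A l.prod ≤ n * P :=
      (exitCount_list S A l hl).trans (by gcongr)
    refine le_trans ?_ (add_le_add_left h1 _)
    unfold exitCount
    rw [hFd, ← ENNReal.tsum_add]
    refine ENNReal.tsum_le_tsum fun x => ?_
    by_cases h1 : x ∈ A <;> by_cases h3 : x * l.prod ∈ A <;> simp [h1, h3]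
  have hsum := Finset.sum_le_sum hg
  rw [Finset.sum_const, Finset.sum_add_distrib, Finset.sum_const, nsmul_eq_mul, nsmul_eq_mul] at hsum
  have hFF : ∑ g ∈ b, ∑' x, (if x ∈ A ∧ x * g ∈ A then (1 : ENNReal) else 0) ≤ F * F := by
    calc _ ≤ ∑' g, ∑' x, (if x ∈ A ∧ x * g ∈ A then (1 : ENNReal) else 0) :=
          ENNReal.sum_le_tsum b
      _ = ∑' x, ∑' g, (if x ∈ A then (1 : ENNReal) else 0) * (if x * g ∈ A then 1 else 0) := by
          rw [ENNReal.tsum_comm]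
          refine tsum_congr fun x => tsum_congr fun g => ?_
          by_cases h1 : x ∈ A <;> by_cases h3 : x * g ∈ A <;> simp [h1, h3]
      _ = ∑' x, (if x ∈ A then (1 : ENNReal) else 0) * F := by
          refine tsum_congr fun x => ?_
          rw [ENNReal.tsum_mul_left]
          congr 1
          exact (Equiv.mulLeft x).tsum_eq (fun y => if y ∈ A then (1 : ENNReal) else 0)
      _ = F * F := by rw [ENNReal.tsum_mul_right]
      _ ≤ _ := le_rfl
  have hc0 : (b.card : ENNReal) ≠ 0 := by exact_mod_cast hb0.ne'
  have hct : (b.card : ENNReal) ≠ ⊤ := ENNReal.natCast_ne_top _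
  have h3 : 2 * (b.card * F) ≤ 2 * (b.card * (n * P)) + b.card * F := by
    calc 2 * (b.card * F) ≤ 2 * (b.card * (n * P) + F * F) := by
          gcongr
          exact hsum.trans (by gcongr)
      _ = 2 * (b.card * (n * P)) + (2 * F) * F := by ring
      _ ≤ _ := by gcongr
  rw [two_mul] at h3
  have h4 := (ENNReal.add_le_add_iff_right (ENNReal.mul_ne_top hct hF)).1 h3
  have h5 : (b.card : ENNReal) * F ≤ b.card * (2 * (n * P)) := by
    refine h4.trans (le_of_eq ?_); ring
  exact (ENNReal.mul_le_mul_iff_right hc0 hct).1 h5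

theorem edge_integral (a b c : ℝ) (hc : 0 ≤ c) :
    ∫⁻ t in Set.Ioi (0 : ℝ), (if t < a ∧ ¬ t < b then (1 : ENNReal) else 0) * ENNReal.ofReal (t ^ c)
      ≤ ENNReal.ofReal |b - a| * ENNReal.ofReal (a ^ c) := by
  calc _ ≤ ∫⁻ t in Set.Ioi (0 : ℝ), (Set.Ico b a).indicator (fun _ => ENNReal.ofReal (a ^ c)) t := by
        refine MeasureTheory.setLIntegral_mono' measurableSet_Ioi fun t ht => ?_
        have ht0 : 0 < t := ht
        by_cases h : t < a ∧ ¬ t < b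
        · rw [if_pos h, one_mul, Set.indicator_of_mem (show t ∈ Set.Ico b a from ⟨not_lt.1 h.2, h.1⟩)]
          apply ENNReal.ofReal_le_ofReal
          exact Real.rpow_le_rpow ht0.le h.1.le hc
        · rw [if_neg h, zero_mul]; exact zero_le
    _ ≤ ∫⁻ t, (Set.Ico b a).indicator (fun _ => ENNReal.ofReal (a ^ c)) t :=
        MeasureTheory.setLIntegral_le_lintegral _ _
    _ = ENNReal.ofReal (a ^ c) * ENNReal.ofReal (a - b) := by
        rw [MeasureTheory.lintegral_indicator measurableSet_Ico,
          MeasureTheory.setLIntegral_const, Real.volume_Ico]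
    _ ≤ _ := by
        rw [mul_comm]
        gcongr
        rw [abs_sub_comm]; exact le_abs_self _

open Classical in
/-- Level set estimate. -/
theorem level_est [Group G] (S : Finset G) (N : ℕ) (hN : 3 ≤ N) (C₁ : ℝ) (hC₁ : 0 < C₁)
    (hball : ∀ n : ℕ, 1 ≤ n → ∃ b : Finset G, C₁ * (n : ℝ) ^ N ≤ b.card ∧
      ∀ g ∈ b, ∃ l : List G, (∀ s ∈ l, s ∈ S) ∧ l.length ≤ n ∧ g = l.prod)
    (m : ℝ) (hm : m = 2 * N / (N - 2))
    (v : G → ℝ) (M : ℝ) (hM : 0 ≤ M)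
    (hvM : ∑' x, ENNReal.ofReal (v x ^ m) ≤ ENNReal.ofReal M) (t : ℝ) (ht : 0 < t) :
    (∑' x, (if x ∈ {x | t < v x} then (1 : ENNReal) else 0)) * ENNReal.ofReal (t ^ (m - 1)) ≤
      ENNReal.ofReal (2 * ((2 / C₁) ^ (1 / (N : ℝ)) + 1) * M ^ (1 / (N : ℝ))) *
        ((∑ s ∈ S, exitCount {x | t < v x} s) * ENNReal.ofReal (t ^ (m / 2))) := by
  have hN3 : (3 : ℝ) ≤ N := by exact_mod_cast hN
  have hN2 : (0 : ℝ) < N - 2 := by linarith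
  have hN0 : (0 : ℝ) < N := by linarith
  have hm0 : 0 < m := by rw [hm]; positivity
  set A := {x | t < v x} with hA
  set F := ∑' x, (if x ∈ A then (1 : ENNReal) else 0) with hF
  set P := ∑ s ∈ S, exitCount A s with hP
  have htm : 0 < t ^ m := by positivity
  rcases A.eq_empty_or_nonempty with h0 | ⟨x₀, hx₀⟩
  · have : F = 0 := by simp [hF, h0]
    rw [this, zero_mul]; exact zero_le
  set Q := M / t ^ m with hQ
  have hFQ : F ≤ ENNReal.ofReal Q := by
    have h1 : F * ENNReal.ofReal (t ^ m) ≤ ENNReal.ofReal M := by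
      refine le_trans ?_ hvM
      rw [hF, ← ENNReal.tsum_mul_right]
      refine ENNReal.tsum_le_tsum fun x => ?_
      split_ifs with h
      · rw [one_mul]
        apply ENNReal.ofReal_le_ofReal
        exact Real.rpow_le_rpow ht.le (le_of_lt h) hm0.le
      · simp
    rw [hQ, ENNReal.ofReal_div_of_pos htm]
    rw [ENNReal.le_div_iff_mul_le (Or.inl (by simpa using htm)) (Or.inl ENNReal.ofReal_ne_top)]
    exact h1
  have hF1 : 1 ≤ F := by
    refine le_trans ?_ (ENNReal.le_tsum x₀)
    rw [if_pos hx₀]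
  have hQ1 : 1 ≤ Q := by
    have := hF1.trans hFQ
    rwa [ENNReal.one_le_ofReal] at this
  have hQ0 : 0 < Q := by linarith
  set κ := (2 / C₁) ^ (1 / (N : ℝ)) with hκ
  have hκ0 : 0 < κ := by positivity
  have hQN1 : 1 ≤ Q ^ (1 / (N : ℝ)) := Real.one_le_rpow hQ1 (by positivity)
  set n := ⌈κ * Q ^ (1 / (N : ℝ))⌉₊ with hn
  have hn1 : 1 ≤ n := Nat.one_le_ceil_iff.2 (by positivity)
  have hnlow : κ * Q ^ (1 / (N : ℝ)) ≤ n := Nat.le_ceil _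
  have hnup : (n : ℝ) ≤ (κ + 1) * Q ^ (1 / (N : ℝ)) := by
    have := Nat.ceil_lt_add_one (a := κ * Q ^ (1 / (N : ℝ))) (by positivity)
    rw [add_mul, one_mul]
    linarith
  have hnN : 2 * Q ≤ C₁ * (n : ℝ) ^ N := by
    have h1 : (κ * Q ^ (1 / (N : ℝ))) ^ N ≤ (n : ℝ) ^ N := by gcongr
    have h2 : (κ * Q ^ (1 / (N : ℝ))) ^ N = 2 / C₁ * Q := by
      rw [hκ, ← Real.mul_rpow (by positivity) (by positivity), ← Real.rpow_natCast,
        ← Real.rpow_mul (by positivity), one_div, inv_mul_cancel₀ hN0.ne', Real.rpow_one]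
    rw [h2] at h1
    have := mul_le_mul_of_nonneg_left h1 hC₁.le
    have e : C₁ * (2 / C₁ * Q) = 2 * Q := by field_simp
    linarith
  obtain ⟨b, hb1, hb2⟩ := hball n hn1
  have hbc : 2 * Q ≤ b.card := hnN.trans hb1
  have hb0 : 0 < b.card := by
    have : (0 : ℝ) < b.card := by linarith
    exact_mod_cast this
  have hiso := isoper S A n b hb2 (ne_top_of_le_ne_top ENNReal.ofReal_ne_top hFQ) hb0 (by
    calc 2 * F ≤ 2 * ENNReal.ofReal Q := by gcongr
      _ = ENNReal.ofReal (2 * Q) := by rw [ENNReal.ofReal_mul (by norm_num)]; simp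
      _ ≤ ENNReal.ofReal (b.card) := ENNReal.ofReal_le_ofReal hbc
      _ = _ := ENNReal.ofReal_natCast _)
  have hexp : Q ^ (1 / (N : ℝ)) * t ^ (m - 1) = M ^ (1 / (N : ℝ)) * t ^ (m / 2) := by
    rw [hQ, Real.div_rpow hM htm.le, ← Real.rpow_mul ht.le, div_mul_eq_mul_div, mul_div_assoc,
      ← Real.rpow_sub ht]
    congr 2
    rw [hm]; field_simp; ring
  calc F * ENNReal.ofReal (t ^ (m - 1))
      ≤ (2 * (n * P)) * ENNReal.ofReal (t ^ (m - 1)) := by gcongr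
    _ ≤ (2 * (ENNReal.ofReal ((κ + 1) * Q ^ (1 / (N : ℝ))) * P)) * ENNReal.ofReal (t ^ (m - 1)) := by
        gcongr
        rw [← ENNReal.ofReal_natCast]
        exact ENNReal.ofReal_le_ofReal hnup
    _ = ENNReal.ofReal (2 * (κ + 1) * (Q ^ (1 / (N : ℝ)) * t ^ (m - 1))) * P := by
        rw [show (2 : ENNReal) = ENNReal.ofReal 2 by simp, ENNReal.ofReal_mul (p := 2 * (κ + 1)) (by positivity),
          ENNReal.ofReal_mul (p := 2) (by positivity), ENNReal.ofReal_mul (p := κ + 1) (by positivity),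
          ENNReal.ofReal_mul (p := Q ^ (1 / (N : ℝ))) (by positivity)]
        ring
    _ = _ := by
        rw [hexp, ← mul_assoc, ENNReal.ofReal_mul (by positivity)]
        ring

/-- Sobolev inequality. -/
theorem sobolev [Group G] [Countable G] (S : Finset G) (N : ℕ) (hN : 3 ≤ N) (C₁ : ℝ) (hC₁ : 0 < C₁)
    (hball : ∀ n : ℕ, 1 ≤ n → ∃ b : Finset G, C₁ * (n : ℝ) ^ N ≤ b.card ∧
      ∀ g ∈ b, ∃ l : List G, (∀ s ∈ l, s ∈ S) ∧ l.length ≤ n ∧ g = l.prod) :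
    ∃ K : ℝ, 0 < K ∧ ∀ u : G → ℝ, MemD12 S N u →
      ∑' x, |u x| ^ (2 * (N : ℝ) / ((N : ℝ) - 2)) ≤
        (K * D12Norm S u) ^ (2 * (N : ℝ) / ((N : ℝ) - 2)) := by
  classical
  have hN3 : (3 : ℝ) ≤ N := by exact_mod_cast hN
  have hN2 : (0 : ℝ) < N - 2 := by linarith
  have hN0 : (0 : ℝ) < N := by linarith
  set m : ℝ := 2 * (N : ℝ) / ((N : ℝ) - 2) with hm
  have hm0 : 0 < m := by positivity
  set κ := 2 * ((2 / C₁) ^ (1 / (N : ℝ)) + 1) with hκ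
  have hκ0 : 0 < κ := by positivity
  refine ⟨m * κ * (S.card + 1), by positivity, fun u hu => ?_⟩
  set v : G → ℝ := fun x => |u x| with hv
  have hv0 : ∀ x, 0 ≤ v x := fun x => abs_nonneg _
  set M : ℝ := ∑' x, |u x| ^ m with hM
  have hMs : Summable fun x => v x ^ m := hu.1
  have hM0 : 0 ≤ M := tsum_nonneg fun x => by positivity
  have hgs0 : ∀ x, 0 ≤ gradSq S u x := fun x => Finset.sum_nonneg fun s _ => sq_nonneg _
  have hG0 : 0 ≤ ∑' x, gradSq S u x := tsum_nonneg hgs0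
  set D := D12Norm S u with hD
  have hD0 : 0 ≤ D := Real.rpow_nonneg hG0 _
  rcases hM0.eq_or_lt with h0 | hMpos
  · rw [← h0]; positivity
  have hMe : ∑' x, ENNReal.ofReal (v x ^ m) = ENNReal.ofReal M :=
    (ENNReal.ofReal_tsum_of_nonneg (fun x => Real.rpow_nonneg (hv0 x) _) hMs).symm
  -- edge sums
  have hedge : ∀ s ∈ S, ∑' x, ENNReal.ofReal |v (x * s) - v x| * ENNReal.ofReal (v x ^ (m / 2))
      ≤ ENNReal.ofReal (D * M ^ ((1 : ℝ) / 2)) := by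
    intro s hs
    have h22 : (2 : ℝ).HolderConjugate 2 := by
      rw [Real.holderConjugate_iff]; norm_num
    refine (tsum_holder h22 _ _).trans ?_
    rw [ENNReal.ofReal_mul hD0]
    refine mul_le_mul' ?_ ?_
    · rw [hD, D12Norm, ← ENNReal.ofReal_rpow_of_nonneg hG0 (by norm_num)]
      refine ENNReal.rpow_le_rpow ?_ (by norm_num)
      rw [ENNReal.ofReal_tsum_of_nonneg hgs0 hu.2]
      refine ENNReal.tsum_le_tsum fun x => ?_
      rw [ENNReal.ofReal_rpow_of_nonneg (abs_nonneg _) (by norm_num)]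
      apply ENNReal.ofReal_le_ofReal
      rw [Real.rpow_two, sq_abs]
      calc (v (x * s) - v x) ^ 2 ≤ (u (x * s) - u x) ^ 2 := by
            rw [sq_le_sq]; exact abs_abs_sub_abs_le _ _
        _ ≤ gradSq S u x :=
            Finset.single_le_sum (f := fun s => (u (x * s) - u x) ^ 2) (fun _ _ => sq_nonneg _) hs
    · rw [← ENNReal.ofReal_rpow_of_nonneg hM0 (by norm_num)]
      refine ENNReal.rpow_le_rpow ?_ (by norm_num)
      rw [← hMe]
      refine ENNReal.tsum_le_tsum fun x => ?_
      rw [ENNReal.ofReal_rpow_of_nonneg (Real.rpow_nonneg (hv0 x) _) (by norm_num),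
        ← Real.rpow_mul (hv0 x), div_mul_cancel₀ _ (by norm_num)]
  -- coarea
  have hcoarea : ∫⁻ t in Set.Ioi (0 : ℝ),
      (∑ s ∈ S, exitCount {x | t < v x} s) * ENNReal.ofReal (t ^ (m / 2))
      ≤ ENNReal.ofReal (S.card * (D * M ^ ((1 : ℝ) / 2))) := by
    have hmeas : ∀ (s x : G), Measurable fun t : ℝ =>
        (if t < v x ∧ ¬ t < v (x * s) then (1 : ENNReal) else 0) * ENNReal.ofReal (t ^ (m / 2)) := by
      intro s x
      refine Measurable.mul ?_ (by fun_prop)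
      exact Measurable.ite (measurableSet_Iio.inter measurableSet_Iio.compl)
        measurable_const measurable_const
    have e : ∀ t : ℝ, (∑ s ∈ S, exitCount {x | t < v x} s) * ENNReal.ofReal (t ^ (m / 2))
        = ∑ s ∈ S, ∑' x, (if t < v x ∧ ¬ t < v (x * s) then (1 : ENNReal) else 0)
            * ENNReal.ofReal (t ^ (m / 2)) := by
      intro t
      rw [Finset.sum_mul]
      refine Finset.sum_congr rfl fun s _ => ?_
      rw [ENNReal.tsum_mul_right]
      congr 1
    simp only [e]
    rw [MeasureTheory.lintegral_finsetSum _ (fun s _ => Measurable.tsum (hmeas s))]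
    have hb : ∀ s ∈ S, ∫⁻ t in Set.Ioi (0 : ℝ),
        ∑' x, (if t < v x ∧ ¬ t < v (x * s) then (1 : ENNReal) else 0)
            * ENNReal.ofReal (t ^ (m / 2)) ≤ ENNReal.ofReal (D * M ^ ((1 : ℝ) / 2)) := by
      intro s hs
      rw [MeasureTheory.lintegral_tsum fun x => (hmeas s x).aemeasurable]
      refine le_trans (ENNReal.tsum_le_tsum fun x => ?_) (hedge s hs)
      exact edge_integral (v x) (v (x * s)) (m / 2) (by positivity)
    refine (Finset.sum_le_sum hb).trans ?_
    rw [Finset.sum_const, nsmul_eq_mul, ENNReal.ofReal_mul (p := (S.card : ℝ)) (by positivity),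
      ENNReal.ofReal_natCast]
  -- layer cake
  have hlayer : ENNReal.ofReal M = ENNReal.ofReal m * ∫⁻ t in Set.Ioi (0 : ℝ),
      (∑' x, (if x ∈ {x | t < v x} then (1 : ENNReal) else 0)) * ENNReal.ofReal (t ^ (m - 1)) := by
    let _ : MeasurableSpace G := ⊤
    have h := MeasureTheory.lintegral_rpow_eq_lintegral_meas_lt_mul
      (MeasureTheory.Measure.count (α := G)) (f := v) (Filter.Eventually.of_forall hv0)
      measurable_from_top.aemeasurable hm0
    rw [MeasureTheory.lintegral_count, hMe] at h
    rw [h]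
    congr 1
    refine MeasureTheory.lintegral_congr fun t => ?_
    congr 1
    rw [← MeasureTheory.lintegral_indicator_one (MeasurableSpace.measurableSet_top),
      MeasureTheory.lintegral_count]
    refine tsum_congr fun x => ?_
    simp [Set.indicator]
  have hmain : ENNReal.ofReal M ≤ ENNReal.ofReal
      (m * (κ * M ^ (1 / (N : ℝ)) * (S.card * (D * M ^ ((1 : ℝ) / 2))))) := by
    calc ENNReal.ofReal M ≤ ENNReal.ofReal m * ∫⁻ t in Set.Ioi (0 : ℝ),
          ENNReal.ofReal (κ * M ^ (1 / (N : ℝ))) *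
            ((∑ s ∈ S, exitCount {x | t < v x} s) * ENNReal.ofReal (t ^ (m / 2))) := by
          rw [hlayer]
          gcongr 1
          refine MeasureTheory.setLIntegral_mono' measurableSet_Ioi fun t ht => ?_
          exact level_est S N hN C₁ hC₁ hball m hm v M hM0 hMe.le t ht
      _ ≤ ENNReal.ofReal m * (ENNReal.ofReal (κ * M ^ (1 / (N : ℝ))) *
            ENNReal.ofReal (S.card * (D * M ^ ((1 : ℝ) / 2)))) := by
          rw [MeasureTheory.lintegral_const_mul' _ _ ENNReal.ofReal_ne_top]
          gcongr
      _ = _ := by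
          rw [← ENNReal.ofReal_mul (by positivity), ← ENNReal.ofReal_mul (by positivity)]
  rw [ENNReal.ofReal_le_ofReal_iff (by positivity)] at hmain
  have hsplit : M = M ^ (1 / m) * (M ^ (1 / (N : ℝ)) * M ^ ((1 : ℝ) / 2)) := by
    rw [← Real.rpow_add hMpos, ← Real.rpow_add hMpos]
    nth_rewrite 1 [← Real.rpow_one M]
    congr 1
    rw [hm]; field_simp; ring
  have hpos : 0 < M ^ (1 / (N : ℝ)) * M ^ ((1 : ℝ) / 2) := by positivity
  have h1 : M ^ (1 / m) ≤ m * κ * S.card * D := by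
    refine le_of_mul_le_mul_right ?_ hpos
    rw [← hsplit]
    refine hmain.trans (le_of_eq ?_)
    ring
  have h2 : M ^ (1 / m) ≤ m * κ * (S.card + 1) * D := by
    refine h1.trans ?_
    gcongr
    linarith
  calc M = (M ^ (1 / m)) ^ m := by
        rw [← Real.rpow_mul hM0, one_div, inv_mul_cancel₀ hm0.ne', Real.rpow_one]
    _ ≤ _ := Real.rpow_le_rpow (by positivity) h2 hm0.le

theorem wordDist_left [Group G] (S : Finset G) (x y : G) :
    wordDist S x y = wordDist S 1 (x⁻¹ * y) := by
  unfold wordDist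
  simp only [one_mul, inv_mul_eq_iff_eq_mul]

theorem wordDist_spec [Group G] (S : Finset G) (hS_gen : Subgroup.closure (S : Set G) = ⊤)
    (hS_sym : ∀ s ∈ S, s⁻¹ ∈ S) (g : G) :
    ∃ l : List G, (∀ s ∈ l, s ∈ S) ∧ l.length = wordDist S 1 g ∧ g = l.prod := by
  have hne : {k : ℕ | ∃ l : List G, (∀ s ∈ l, s ∈ S) ∧ l.length = k ∧ g = 1 * l.prod}.Nonempty := by
    have hg : g ∈ Subgroup.closure (S : Set G) := by rw [hS_gen]; trivial
    rw [← Subgroup.mem_toSubmonoid, Subgroup.closure_toSubmonoid] at hg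
    obtain ⟨l, hl, hlg⟩ := Submonoid.exists_list_of_mem_closure hg
    refine ⟨l.length, l, fun s hs => ?_, rfl, by rw [one_mul, hlg]⟩
    rcases hl s hs with h | h
    · exact h
    · simpa using hS_sym _ (Set.mem_inv.1 h)
  obtain ⟨l, hl, hlen, hgl⟩ := Nat.sInf_mem hne
  exact ⟨l, hl, hlen, by rw [hgl, one_mul]⟩

theorem sobolev_type_inequality
    [Group G] [Countable G]
    (S : Finset G) (hS_gen : Subgroup.closure (S : Set G) = ⊤)
    (hS_sym : ∀ s ∈ S, s⁻¹ ∈ S) (hS_e : (1 : G) ∉ S)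
    (N : ℕ) (hN : 3 ≤ N)
    (C₁ C₂ : ℝ) (hC₁ : 0 < C₁) (hC₂ : 0 < C₂)
    (hgrowth : ∀ n : ℕ, 1 ≤ n →
      C₁ * (n : ℝ) ^ N ≤ (Nat.card {x : G // wordDist S 1 x ≤ n} : ℝ) ∧
      (Nat.card {x : G // wordDist S 1 x ≤ n} : ℝ) ≤ C₂ * (n : ℝ) ^ N)
    (α : ℝ) (hα : 0 < α) (hαN : α < N)
    (Rα : G → G → ℝ) (hR_nonneg : ∀ x y, 0 ≤ Rα x y)
    (hR_symm : ∀ x y, Rα x y = Rα y x)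
    (c₁ c₂ : ℝ) (hc₁ : 0 < c₁) (hc₂ : 0 < c₂)
    (hR_low : ∀ x y : G, x ≠ y → c₁ * (wordDist S x y : ℝ) ^ (α - (N : ℝ)) ≤ Rα x y)
    (hR_up : ∀ x y : G, x ≠ y → Rα x y ≤ c₂ * (wordDist S x y : ℝ) ^ (α - (N : ℝ)))
    (hR_diag : ∀ x : G, Rα x x ≤ c₂)
    (p : ℝ) (hp : ((N : ℝ) + α) / ((N : ℝ) - 2) ≤ p) :
    ∃ C : ℝ, 0 < C ∧ ∀ u : G → ℝ, MemD12 S N u →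
      (∑' x, conv Rα (fun y => |u y| ^ p) x * |u x| ^ p) ≤
        C * D12Norm S u ^ (2 * p) := by
  classical
  have hN3 : (3 : ℝ) ≤ N := by exact_mod_cast hN
  have hN2 : (0 : ℝ) < N - 2 := by linarith
  have hN0 : (0 : ℝ) < N := by linarith
  have hNa : (0 : ℝ) < N + α := by linarith
  have hp0 : 0 < p := lt_of_lt_of_le (by positivity) hp
  set w : G → ℕ := fun g => wordDist S 1 g with hw
  have hfin : ∀ n : ℕ, 1 ≤ n → Finite {x : G // w x ≤ n} := by
    intro n hn
    have h1 := (hgrowth n hn).1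
    have hn0 : (0 : ℝ) < n := by exact_mod_cast hn
    have h2 : (0 : ℝ) < (Nat.card {x : G // wordDist S 1 x ≤ n} : ℝ) :=
      lt_of_lt_of_le (by positivity) h1
    exact Nat.finite_of_card_ne_zero (by exact_mod_cast h2.ne')
  have hV := ball_count w N C₂ hC₂ hfin (fun n hn => (hgrowth n hn).2)
  have hspec := wordDist_spec S hS_gen hS_sym
  have hball : ∀ n : ℕ, 1 ≤ n → ∃ b : Finset G, C₁ * (n : ℝ) ^ N ≤ b.card ∧
      ∀ g ∈ b, ∃ l : List G, (∀ s ∈ l, s ∈ S) ∧ l.length ≤ n ∧ g = l.prod := by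
    intro n hn
    have hf : {x : G | w x ≤ n}.Finite := hfin n hn
    refine ⟨hf.toFinset, ?_, ?_⟩
    · have h1 := (hgrowth n hn).1
      have e : Nat.card {x : G // wordDist S 1 x ≤ n} = hf.toFinset.card := by
        rw [← Set.ncard_eq_toFinset_card _ hf]; rfl
      rwa [e] at h1
    · intro g hg
      rw [Set.Finite.mem_toFinset] at hg
      obtain ⟨l, hl, hlen, hgl⟩ := hspec g
      exact ⟨l, hl, hlen.le.trans hg, hgl⟩
  have hw0 : ∀ g, w g = 0 → g = 1 := by
    intro g hg
    obtain ⟨l, hl, hlen, hgl⟩ := hspec g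
    have : l.length = 0 := hlen.trans hg
    rw [List.length_eq_zero_iff] at this
    simpa [this] using hgl
  obtain ⟨H, hH, hhls⟩ := hls w N (by omega) C₂ hC₂ hw0 hV α hα hαN Rα hR_symm c₂ hc₂
    (fun x y hxy => by rw [hw]; simp only; rw [← wordDist_left]; exact hR_up x y hxy) hR_diag
  obtain ⟨K, hK, hsob⟩ := sobolev S N hN C₁ hC₁ hball
  set m : ℝ := 2 * (N : ℝ) / ((N : ℝ) - 2) with hm
  have hm0 : 0 < m := by positivity
  refine ⟨H * K ^ (2 * p), by positivity, fun u hu => ?_⟩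
  have hs := hsob u hu
  have hD0 : 0 ≤ D12Norm S u := Real.rpow_nonneg
    (tsum_nonneg fun x => Finset.sum_nonneg fun s _ => sq_nonneg _) _
  set D := D12Norm S u with hD
  have hus : Summable fun x => |u x| ^ m := hu.1
  have hle : ∀ x, |u x| ≤ K * D := by
    intro x
    have h1 : |u x| ^ m ≤ (K * D) ^ m :=
      (hus.le_tsum x (fun y _ => by positivity)).trans hs
    exact (Real.rpow_le_rpow_iff (abs_nonneg _) (by positivity) hm0).1 h1
  rcases hD0.eq_or_lt with h0 | hDpos
  · have hu0 : ∀ x, u x = 0 := by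
      intro x
      have := hle x
      rw [← h0, mul_zero] at this
      exact abs_eq_zero.1 (le_antisymm this (abs_nonneg _))
    simp only [hu0, abs_zero, Real.zero_rpow hp0.ne', mul_zero, tsum_zero]
    positivity
  set L := K * D with hL
  have hL0 : 0 < L := by positivity
  set v : G → ℝ := fun x => |u x| / L with hv
  have hv0 : ∀ x, 0 ≤ v x := fun x => by positivity
  have hv1 : ∀ x, v x ≤ 1 := fun x => (div_le_one hL0).2 (hle x)
  have huv : ∀ x, |u x| ^ p = L ^ p * v x ^ p := by
    intro x
    rw [← Real.mul_rpow hL0.le (hv0 x)]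
    congr 1
    simp only [hv]; field_simp
  have hf := hhls (fun x => v x ^ p) (fun x => Real.rpow_nonneg (hv0 x) _) (by
    calc _ ≤ ∑' x, ENNReal.ofReal (|u x| ^ m / L ^ m) := by
          refine ENNReal.tsum_le_tsum fun x => ENNReal.ofReal_le_ofReal ?_
          rw [← Real.div_rpow (abs_nonneg _) hL0.le, ← Real.rpow_mul (hv0 x)]
          refine Real.rpow_le_rpow_of_exponent_ge' (hv0 x) (hv1 x) hm0.le ?_
          calc m = (N + α) / (N - 2) * (2 * N / (N + α)) := by rw [hm]; field_simp
            _ ≤ _ := by gcongr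
      _ = ENNReal.ofReal ((∑' x, |u x| ^ m) / L ^ m) := by
          rw [← ENNReal.ofReal_tsum_of_nonneg (fun x => by positivity) (hus.div_const _),
            tsum_div_const]
      _ ≤ 1 := by
          rw [ENNReal.ofReal_le_one]
          exact (div_le_one (by positivity)).2 hs)
  have hfinal : ENNReal.ofReal (∑' x, conv Rα (fun y => |u y| ^ p) x * |u x| ^ p)
      ≤ ENNReal.ofReal (L ^ p * L ^ p * H) := by
    have hcn : ∀ x, 0 ≤ conv Rα (fun y => |u y| ^ p) x := fun x =>
      tsum_nonneg fun y => mul_nonneg (hR_nonneg _ _) (by positivity)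
    refine (ofReal_tsum_le _ (fun x => mul_nonneg (hcn x) (by positivity))).trans ?_
    calc _ ≤ ∑' x, ∑' y, ENNReal.ofReal (L ^ p * L ^ p) *
          ENNReal.ofReal (Rα x y * v y ^ p * v x ^ p) := by
          refine ENNReal.tsum_le_tsum fun x => ?_
          rw [ENNReal.ofReal_mul (hcn x)]
          refine (mul_le_mul_left (ofReal_tsum_le _
            (fun y => mul_nonneg (hR_nonneg _ _) (by positivity))) _).trans ?_
          rw [← ENNReal.tsum_mul_right]
          refine ENNReal.tsum_le_tsum fun y => ?_
          rw [← ENNReal.ofReal_mul (mul_nonneg (hR_nonneg _ _) (by positivity)),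
            ← ENNReal.ofReal_mul (by positivity)]
          apply ENNReal.ofReal_le_ofReal
          rw [huv x, huv y]
          apply le_of_eq; ring
      _ ≤ _ := by
          simp only [ENNReal.tsum_mul_left]
          rw [ENNReal.ofReal_mul (p := L ^ p * L ^ p) (by positivity)]
          gcongr
  rw [ENNReal.ofReal_le_ofReal_iff (by positivity)] at hfinal
  refine hfinal.trans (le_of_eq ?_)
  rw [← Real.rpow_add hL0, ← two_mul, hL, Real.mul_rpow hK.le hDpos.le]
  ring

end Choquard
end
end

section
/- (Brézis–Lieb lemma for the nonlocal Riesz term.) Let Ω ⊆ G, N ≥ 3, α ∈ (0, N), p ≥ 1, and let {u_n} be a sequence uniformly bounded in ℓ^{2Np/(N+α)}(G) that converges pointwise on G to a function u. Then lim_{n→∞} ( ∑_{x∈Ω} (R_α ∗ |u_n|^p)(x)|u_n(x)|^p − ∑_{x∈Ω} (R_α ∗ |u_n−u|^p)(x)|u_n(x)−u(x)|^p ) = ∑_{x∈Ω} (R_α ∗ |u|^p)(x)|u(x)|^p. -/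
open Filter Topology

noncomputable section

namespace Choquard

variable {G : Type*}

lemma geom_sum_ofReal (A q : ℝ) (hA : 0 ≤ A) (hq : 0 ≤ q) (hq1 : q < 1) :
    ∑' j : ℕ, ENNReal.ofReal (A * q ^ j) = ENNReal.ofReal (A * (1 - q)⁻¹) := by
  rw [← ENNReal.ofReal_tsum_of_nonneg (fun j => by positivity)
    ((summable_geometric_of_lt_one hq hq1).mul_left A), tsum_mul_left,
    tsum_geometric_of_lt_one hq hq1]

lemma near_sum_s6 {ι : Type*} (d : ι → ℕ) (C D α : ℝ) (hC : 0 ≤ C) (hα : 0 < α) (hD : α < D)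
    (hcount : ∀ s : ℝ, 0 < s → ∑' y, (if 1 ≤ d y ∧ (d y : ℝ) ≤ s then (1 : ENNReal) else 0)
      ≤ ENNReal.ofReal (C * s ^ D)) (ρ : ℝ) (hρ : 0 < ρ) :
    ∑' y, ENNReal.ofReal (if 1 ≤ d y ∧ (d y : ℝ) ≤ ρ then (d y : ℝ) ^ (α - D) else 0)
      ≤ ENNReal.ofReal (C * 2 ^ (D - α) * (1 - (2 : ℝ) ^ (-α))⁻¹ * ρ ^ α) := by
  have h2 : (2 : ℝ) ^ (-α) < 1 := Real.rpow_lt_one_of_one_lt_of_neg (by norm_num) (by linarith)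
  calc _ ≤ ∑' y, ∑' j : ℕ, ENNReal.ofReal ((ρ / 2 ^ (j + 1)) ^ (α - D)) *
        (if 1 ≤ d y ∧ (d y : ℝ) ≤ ρ / 2 ^ j then (1 : ENNReal) else 0) := by
        refine ENNReal.tsum_le_tsum fun y => ?_
        split_ifs with h
        · have hd : (0 : ℝ) < d y := by exact_mod_cast h.1
          obtain ⟨j, hj1, hj2⟩ := exists_nat_pow_near (x := ρ / d y) (y := (2 : ℝ))
            ((one_le_div hd).2 h.2) (by norm_num)
          refine le_trans ?_ (ENNReal.le_tsum j)
          rw [le_div_iff₀ hd] at hj1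
          rw [div_lt_iff₀ hd] at hj2
          rw [if_pos ⟨h.1, by rw [le_div_iff₀ (by positivity)]; linarith⟩, mul_one]
          apply ENNReal.ofReal_le_ofReal
          apply Real.rpow_le_rpow_of_nonpos (by positivity) _ (by linarith)
          rw [div_le_iff₀ (by positivity)]; linarith
        · simp
    _ = ∑' j : ℕ, ENNReal.ofReal ((ρ / 2 ^ (j + 1)) ^ (α - D)) *
        ∑' y, (if 1 ≤ d y ∧ (d y : ℝ) ≤ ρ / 2 ^ j then (1 : ENNReal) else 0) := by
        rw [ENNReal.tsum_comm]; simp_rw [ENNReal.tsum_mul_left]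
    _ ≤ ∑' j : ℕ, ENNReal.ofReal ((C * 2 ^ (D - α) * ρ ^ α) * ((2 : ℝ) ^ (-α)) ^ j) := by
        refine ENNReal.tsum_le_tsum fun j => ?_
        refine (mul_le_mul_right (hcount _ (by positivity)) _).trans ?_
        rw [← ENNReal.ofReal_mul (by positivity)]
        apply ENNReal.ofReal_le_ofReal
        apply le_of_eq
        rw [← Real.rpow_natCast, ← Real.rpow_natCast, ← Real.rpow_natCast,
          Real.div_rpow (by positivity) (by positivity),
          Real.div_rpow (by positivity) (by positivity), ← Real.rpow_mul (by positivity),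
          ← Real.rpow_mul (by positivity), ← Real.rpow_mul (by positivity)]
        rw [div_eq_mul_inv, div_eq_mul_inv, ← Real.rpow_neg (by positivity),
          ← Real.rpow_neg (by positivity)]
        have e1 : ρ ^ α = ρ ^ (α - D) * ρ ^ D := by
          rw [← Real.rpow_add hρ]; ring_nf
        have e2 : (2 : ℝ) ^ (-(((j + 1 : ℕ) : ℝ) * (α - D))) * 2 ^ (-((j : ℝ) * D))
          = 2 ^ (D - α) * 2 ^ (-α * j) := by
          rw [← Real.rpow_add (by norm_num), ← Real.rpow_add (by norm_num)]
          congr 1; push_cast; ring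
        rw [e1]; linear_combination (ρ ^ (α - D) * ρ ^ D * C) * e2
    _ = _ := by
        rw [geom_sum_ofReal _ _ (by positivity) (by positivity) h2]; ring_nf

lemma far_sum_s6 {ι : Type*} (d : ι → ℕ) (C D : ℝ) (hC : 0 ≤ C) (hD : 0 < D)
    (hcount : ∀ s : ℝ, 0 < s → ∑' y, (if 1 ≤ d y ∧ (d y : ℝ) ≤ s then (1 : ENNReal) else 0)
      ≤ ENNReal.ofReal (C * s ^ D)) (ρ : ℝ) (hρ : 0 < ρ) :
    ∑' y, ENNReal.ofReal (if 1 ≤ d y ∧ ρ < (d y : ℝ) then (d y : ℝ) ^ (-2 * D) else 0)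
      ≤ ENNReal.ofReal (C * 2 ^ D * (1 - (2 : ℝ) ^ (-D))⁻¹ * ρ ^ (-D)) := by
  have h2 : (2 : ℝ) ^ (-D) < 1 := Real.rpow_lt_one_of_one_lt_of_neg (by norm_num) (by linarith)
  calc _ ≤ ∑' y, ∑' j : ℕ, ENNReal.ofReal ((ρ * 2 ^ j) ^ (-2 * D)) *
        (if 1 ≤ d y ∧ (d y : ℝ) ≤ ρ * 2 ^ (j + 1) then (1 : ENNReal) else 0) := by
        refine ENNReal.tsum_le_tsum fun y => ?_
        split_ifs with h
        · have hd : (0 : ℝ) < d y := by exact_mod_cast h.1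
          obtain ⟨j, hj1, hj2⟩ := exists_nat_pow_near (x := d y / ρ) (y := (2 : ℝ))
            ((one_le_div hρ).2 h.2.le) (by norm_num)
          refine le_trans ?_ (ENNReal.le_tsum j)
          rw [le_div_iff₀ hρ] at hj1
          rw [div_lt_iff₀ hρ] at hj2
          rw [if_pos ⟨h.1, by linarith⟩, mul_one]
          apply ENNReal.ofReal_le_ofReal
          apply Real.rpow_le_rpow_of_nonpos (by positivity) _ (by linarith)
          linarith
        · simp
    _ = ∑' j : ℕ, ENNReal.ofReal ((ρ * 2 ^ j) ^ (-2 * D)) *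
        ∑' y, (if 1 ≤ d y ∧ (d y : ℝ) ≤ ρ * 2 ^ (j + 1) then (1 : ENNReal) else 0) := by
        rw [ENNReal.tsum_comm]; simp_rw [ENNReal.tsum_mul_left]
    _ ≤ ∑' j : ℕ, ENNReal.ofReal ((C * 2 ^ D * ρ ^ (-D)) * ((2 : ℝ) ^ (-D)) ^ j) := by
        refine ENNReal.tsum_le_tsum fun j => ?_
        refine (mul_le_mul_right (hcount _ (by positivity)) _).trans ?_
        rw [← ENNReal.ofReal_mul (by positivity)]
        apply ENNReal.ofReal_le_ofReal
        apply le_of_eq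
        rw [← Real.rpow_natCast, ← Real.rpow_natCast, ← Real.rpow_natCast,
          Real.mul_rpow (by positivity) (by positivity),
          Real.mul_rpow (by positivity) (by positivity), ← Real.rpow_mul (by positivity),
          ← Real.rpow_mul (by positivity), ← Real.rpow_mul (by positivity)]
        have e1 : ρ ^ (-D) = ρ ^ (-2 * D) * ρ ^ D := by
          rw [← Real.rpow_add hρ]; ring_nf
        have e2 : (2 : ℝ) ^ ((j : ℝ) * (-2 * D)) * 2 ^ (((j + 1 : ℕ) : ℝ) * D)
          = 2 ^ D * 2 ^ (-D * j) := by
          rw [← Real.rpow_add (by norm_num), ← Real.rpow_add (by norm_num)]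
          congr 1; push_cast; ring
        rw [e1]; linear_combination (ρ ^ (-2 * D) * ρ ^ D * C) * e2
    _ = _ := by
        rw [geom_sum_ofReal _ _ (by positivity) (by positivity) h2]; ring_nf

/-- Weighted Young. -/
lemma young_weighted {r r' : ℝ} (hr : r.HolderConjugate r') (t w b : ℝ) (ht : 0 < t)
    (hw : 0 ≤ w) (hb : 0 ≤ b) :
    w * b ≤ t ^ (r - 1) * b ^ r + t⁻¹ * w ^ r' := by
  have hl : 0 < t ^ (1 / r') := Real.rpow_pos_of_pos ht _
  have h := Real.young_inequality_of_nonneg (a := t ^ (1 / r') * b) (b := (t ^ (1 / r'))⁻¹ * w)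
    (by positivity) (by positivity) hr
  have e : t ^ (1 / r') * b * ((t ^ (1 / r'))⁻¹ * w) = w * b := by field_simp
  rw [e, Real.mul_rpow hl.le hb, Real.mul_rpow (by positivity) hw,
    Real.inv_rpow hl.le, ← Real.rpow_mul ht.le, ← Real.rpow_mul ht.le] at h
  have e1 : 1 / r' * r = r - 1 := by
    have := hr.symm.ne_zero
    have := hr.sub_one_mul_conj
    field_simp; linarith
  have e2 : 1 / r' * r' = 1 := by have := hr.symm.ne_zero; field_simp
  rw [e1, e2, Real.rpow_one] at h
  have i1 : 0 ≤ t ^ (r - 1) * b ^ r := by positivity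
  have i2 : 0 ≤ t⁻¹ * w ^ r' := by positivity
  exact h.trans (add_le_add (div_le_self i1 hr.lt.le) (div_le_self i2 hr.symm.lt.le))


lemma row_bound {ι : Type*} (R : ι → ι → ℝ) (d : ι → ι → ℕ) (C D α c₂ : ℝ) (hC : 0 ≤ C)
    (hα : 0 < α) (hD : α < D) (hc₂ : 0 < c₂)
    (hcount : ∀ x, ∀ s : ℝ, 0 < s →
      ∑' y, (if 1 ≤ d x y ∧ (d x y : ℝ) ≤ s then (1 : ENNReal) else 0)
      ≤ ENNReal.ofReal (C * s ^ D))
    (hR_up : ∀ x y, x ≠ y → R x y ≤ c₂ * (d x y : ℝ) ^ (α - D))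
    (hR_diag : ∀ x, R x x ≤ c₂) :
    ∃ K : ℝ, 0 ≤ K ∧ ∀ (x : ι) (t : ℝ) (b : ι → ℝ), 0 < t → t ≤ 1 → (∀ y, 0 ≤ b y) →
      ∑' y, ENNReal.ofReal (b y ^ (2 * D / (D + α))) ≤ 1 →
      ∑' y, ENNReal.ofReal (if b y ≤ t then R x y * b y else 0)
        ≤ ENNReal.ofReal (K * t ^ (2 * D / (D + α) - 1)) := by
  classical
  have hDp : 0 < D := hα.trans hD
  have h2 : (2 : ℝ) ^ (-α) < 1 := Real.rpow_lt_one_of_one_lt_of_neg (by norm_num) (by linarith)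
  have h3 : (2 : ℝ) ^ (-D) < 1 := Real.rpow_lt_one_of_one_lt_of_neg (by norm_num) (by linarith)
  have hk1 : 0 ≤ (1 - (2 : ℝ) ^ (-α))⁻¹ := inv_nonneg.2 (by linarith)
  have hk2 : 0 ≤ (1 - (2 : ℝ) ^ (-D))⁻¹ := inv_nonneg.2 (by linarith)
  set K1 := C * 2 ^ (D - α) * (1 - (2 : ℝ) ^ (-α))⁻¹ with hK1
  set K2 := C * 2 ^ D * (1 - (2 : ℝ) ^ (-D))⁻¹ with hK2
  have hK1n : 0 ≤ K1 := by positivity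
  have hK2n : 0 ≤ K2 := by positivity
  refine ⟨c₂ * (2 + K1 + K2), by positivity, ?_⟩
  intro x t b ht ht1 hb hsum
  set r := 2 * D / (D + α) with hr
  have hDa : 0 < D - α := by linarith
  have hconj : r.HolderConjugate (2 * D / (D - α)) := by
    rw [Real.holderConjugate_iff]
    refine ⟨?_, ?_⟩
    · rw [hr, lt_div_iff₀ (by positivity)]; linarith
    · rw [hr]; field_simp; ring
  set ρ := t ^ (-2 / (D + α)) with hρd
  have hρ : 0 < ρ := Real.rpow_pos_of_pos ht _
  have key : ∀ y, ENNReal.ofReal (if b y ≤ t then R x y * b y else 0) ≤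
      ENNReal.ofReal c₂ * ((if y = x then ENNReal.ofReal t else 0)
        + ENNReal.ofReal (t ^ (r - 1)) * ENNReal.ofReal (b y ^ r)
        + ENNReal.ofReal t * ENNReal.ofReal
          (if 1 ≤ d x y ∧ (d x y : ℝ) ≤ ρ then (d x y : ℝ) ^ (α - D) else 0)
        + ENNReal.ofReal t⁻¹ * ENNReal.ofReal
          (if 1 ≤ d x y ∧ ρ < (d x y : ℝ) then (d x y : ℝ) ^ (-2 * D) else 0)) := by
    intro y
    by_cases hbt : b y ≤ t
    swap
    · simp [hbt]
    rw [if_pos hbt]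
    have hby := hb y
    have hnear : (0 : ℝ) ≤ (if 1 ≤ d x y ∧ (d x y : ℝ) ≤ ρ then (d x y : ℝ) ^ (α - D) else 0) := by
      split_ifs <;> positivity
    have hfar : (0 : ℝ) ≤ (if 1 ≤ d x y ∧ ρ < (d x y : ℝ) then (d x y : ℝ) ^ (-2 * D) else 0) := by
      split_ifs <;> positivity
    have hdel : (0 : ℝ) ≤ (if y = x then t else 0) := by split_ifs <;> positivity
    have edel : (if y = x then ENNReal.ofReal t else 0)
        = ENNReal.ofReal (if y = x then t else 0) := by split_ifs <;> simp
    rw [edel, ← ENNReal.ofReal_mul (by positivity), ← ENNReal.ofReal_mul (by positivity),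
      ← ENNReal.ofReal_mul (by positivity),
      ← ENNReal.ofReal_add (by positivity) (by positivity),
      ← ENNReal.ofReal_add (by positivity) (by positivity),
      ← ENNReal.ofReal_add (by positivity) (by positivity),
      ← ENNReal.ofReal_mul (by positivity)]
    apply ENNReal.ofReal_le_ofReal
    have hyo : 0 ≤ t ^ (r - 1) * b y ^ r := by positivity
    by_cases hyx : y = x
    · subst hyx
      rw [if_pos rfl]
      calc R y y * b y ≤ c₂ * t := by
            apply mul_le_mul (hR_diag y) hbt hby hc₂.le
        _ ≤ _ := by
            apply mul_le_mul_of_nonneg_left _ hc₂.le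
            have := mul_nonneg ht.le hnear
            have := mul_nonneg (inv_pos.2 ht).le hfar
            linarith
    · have hRb : R x y * b y ≤ c₂ * ((d x y : ℝ) ^ (α - D) * b y) := by
        rw [← mul_assoc]
        exact mul_le_mul_of_nonneg_right (hR_up x y (Ne.symm hyx)) hby
      refine hRb.trans (mul_le_mul_of_nonneg_left ?_ hc₂.le)
      rw [if_neg hyx]
      by_cases hd1 : 1 ≤ d x y
      · have hd0 : (0 : ℝ) < d x y := by exact_mod_cast hd1
        by_cases hdr : (d x y : ℝ) ≤ ρ
        · rw [if_pos ⟨hd1, hdr⟩, if_neg (fun h => absurd h.2 (not_lt.2 hdr))]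
          have : (d x y : ℝ) ^ (α - D) * b y ≤ (d x y : ℝ) ^ (α - D) * t :=
            mul_le_mul_of_nonneg_left hbt (by positivity)
          linarith
        · rw [if_neg (fun h => hdr h.2), if_pos ⟨hd1, not_le.1 hdr⟩]
          have h := young_weighted hconj t ((d x y : ℝ) ^ (α - D)) (b y) ht (by positivity) hby
          have e : ((d x y : ℝ) ^ (α - D)) ^ (2 * D / (D - α)) = (d x y : ℝ) ^ (-2 * D) := by
            rw [← Real.rpow_mul hd0.le]; congr 1; field_simp; ring
          rw [e] at h
          linarith
      · have hd0 : d x y = 0 := by omega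
        have e0 : ((d x y : ℕ) : ℝ) ^ (α - D) = 0 := by
          rw [hd0]; simp [Real.zero_rpow (by linarith : α - D ≠ 0)]
        rw [e0, zero_mul, if_neg (fun h => hd1 h.1), if_neg (fun h => hd1 h.1)]
        linarith
  refine (ENNReal.tsum_le_tsum key).trans ?_
  rw [ENNReal.tsum_mul_left, ENNReal.tsum_add, ENNReal.tsum_add, ENNReal.tsum_add, tsum_ite_eq,
    ENNReal.tsum_mul_left, ENNReal.tsum_mul_left, ENNReal.tsum_mul_left]
  have n1 := near_sum_s6 (d x) C D α hC hα hD (hcount x) ρ hρ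
  have n2 := far_sum_s6 (d x) C D hC hDp (hcount x) ρ hρ
  rw [← hK1] at n1
  rw [← hK2] at n2
  have hts : t ≤ t ^ (r - 1) := by
    calc t = t ^ (1 : ℝ) := (Real.rpow_one t).symm
      _ ≤ _ := Real.rpow_le_rpow_of_exponent_ge ht ht1 (by
        rw [hr, sub_le_iff_le_add, div_le_iff₀ (by positivity)]; linarith)
  have ea : t * ρ ^ α = t ^ (r - 1) := by
    rw [hρd, ← Real.rpow_mul ht.le, ← Real.rpow_one_add' ht.le]
    · congr 1; rw [hr]; field_simp; ring
    · have : 1 + -2 / (D + α) * α = (D - α) / (D + α) := by field_simp; ring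
      rw [this]; positivity
  have eb : t⁻¹ * ρ ^ (-D) = t ^ (r - 1) := by
    rw [hρd, ← Real.rpow_mul ht.le, ← Real.rpow_neg_one, ← Real.rpow_add ht]
    congr 1; rw [hr]; field_simp; ring
  calc _ ≤ ENNReal.ofReal c₂ * (ENNReal.ofReal (t ^ (r - 1)) + ENNReal.ofReal (t ^ (r - 1)) * 1
        + ENNReal.ofReal t * ENNReal.ofReal (K1 * ρ ^ α)
        + ENNReal.ofReal t⁻¹ * ENNReal.ofReal (K2 * ρ ^ (-D))) := by
        gcongr
    _ = _ := by
        rw [mul_one, ← ENNReal.ofReal_mul (by positivity), ← ENNReal.ofReal_mul (by positivity),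
          ← ENNReal.ofReal_add (by positivity) (by positivity),
          ← ENNReal.ofReal_add (by positivity) (by positivity),
          ← ENNReal.ofReal_add (by positivity) (by positivity),
          ← ENNReal.ofReal_mul (by positivity)]
        congr 1
        linear_combination (c₂ * K1) * ea + (c₂ * K2) * eb

lemma hls_unit {ι : Type*} (R : ι → ι → ℝ) (r K : ℝ) (hr : 1 < r) (hK : 0 ≤ K)
    (hsymm : ∀ x y, R x y = R y x)
    (hrow : ∀ (x : ι) (t : ℝ) (b : ι → ℝ), 0 < t → t ≤ 1 → (∀ y, 0 ≤ b y) →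
      ∑' y, ENNReal.ofReal (b y ^ r) ≤ 1 →
      ∑' y, ENNReal.ofReal (if b y ≤ t then R x y * b y else 0)
        ≤ ENNReal.ofReal (K * t ^ (r - 1)))
    (a b : ι → ℝ) (ha : ∀ x, 0 ≤ a x) (hb : ∀ x, 0 ≤ b x)
    (hsa : ∑' y, ENNReal.ofReal (a y ^ r) ≤ 1) (hsb : ∑' y, ENNReal.ofReal (b y ^ r) ≤ 1) :
    ∑' x, ∑' y, ENNReal.ofReal (R x y * (a x * b y)) ≤ ENNReal.ofReal (2 * K) := by
  have half : ∀ (a b : ι → ℝ), (∀ x, 0 ≤ a x) → (∀ x, 0 ≤ b x) →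
      ∑' y, ENNReal.ofReal (a y ^ r) ≤ 1 → ∑' y, ENNReal.ofReal (b y ^ r) ≤ 1 →
      ∑' x, ENNReal.ofReal (a x) * ∑' y, ENNReal.ofReal (if b y ≤ a x then R x y * b y else 0)
        ≤ ENNReal.ofReal K := by
    intro a b ha hb hsa hsb
    calc _ ≤ ∑' x, ENNReal.ofReal K * ENNReal.ofReal (a x ^ r) := by
          refine ENNReal.tsum_le_tsum fun x => ?_
          rcases (ha x).eq_or_lt with h0 | h0
          · rw [← h0]; simp
          · have h1 : ENNReal.ofReal (a x ^ r) ≤ 1 := (ENNReal.le_tsum x).trans hsa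
            rw [ENNReal.ofReal_le_one] at h1
            have h2 : a x ≤ 1 := by
              by_contra hcon
              exact absurd h1 (not_le.2 (Real.one_lt_rpow (not_le.1 hcon) (by linarith)))
            refine (mul_le_mul_right (hrow x (a x) b h0 h2 hb hsb) _).trans (le_of_eq ?_)
            rw [← ENNReal.ofReal_mul (ha x), ← ENNReal.ofReal_mul hK]
            congr 1
            rw [Real.rpow_sub_one h0.ne']; field_simp
      _ = ENNReal.ofReal K * ∑' x, ENNReal.ofReal (a x ^ r) := ENNReal.tsum_mul_left
      _ ≤ ENNReal.ofReal K * 1 := by gcongr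
      _ = _ := mul_one _
  calc _ ≤ ∑' x, ∑' y, (ENNReal.ofReal (a x) *
          ENNReal.ofReal (if b y ≤ a x then R x y * b y else 0) +
          ENNReal.ofReal (b y) * ENNReal.ofReal (if a x ≤ b y then R y x * a x else 0)) := by
        refine ENNReal.tsum_le_tsum fun x => ENNReal.tsum_le_tsum fun y => ?_
        rcases le_total (b y) (a x) with h | h
        · rw [if_pos h, ← ENNReal.ofReal_mul (ha x)]
          refine le_trans (le_of_eq ?_) le_self_add
          congr 1; ring
        · rw [if_pos h, ← ENNReal.ofReal_mul (hb y)]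
          refine le_trans (le_of_eq ?_) le_add_self
          congr 1; rw [hsymm]; ring
    _ = ∑' x, ENNReal.ofReal (a x) *
          ∑' y, ENNReal.ofReal (if b y ≤ a x then R x y * b y else 0) +
        ∑' y, ENNReal.ofReal (b y) *
          ∑' x, ENNReal.ofReal (if a x ≤ b y then R y x * a x else 0) := by
        simp_rw [ENNReal.tsum_add]
        congr 1
        · simp_rw [ENNReal.tsum_mul_left]
        · rw [ENNReal.tsum_comm]; simp_rw [ENNReal.tsum_mul_left]
    _ ≤ ENNReal.ofReal K + ENNReal.ofReal K :=
        add_le_add (half a b ha hb hsa hsb) (half b a hb ha hsb hsa)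
    _ = _ := by rw [← ENNReal.ofReal_add hK hK]; ring_nf

/-- The Hardy–Littlewood–Sobolev property of a kernel. -/
def HLSProp {ι : Type*} (R : ι → ι → ℝ) (r K : ℝ) : Prop :=
  ∀ (a b : ι → ℝ) (s t : ℝ), 0 < s → 0 < t →
    (Summable fun x => |a x| ^ r) → (Summable fun x => |b x| ^ r) →
    ∑' x, |a x| ^ r ≤ s ^ r → ∑' x, |b x| ^ r ≤ t ^ r →
    (Summable fun z : ι × ι => R z.1 z.2 * (|a z.1| * |b z.2|)) ∧
      ∑' z : ι × ι, R z.1 z.2 * (|a z.1| * |b z.2|) ≤ K * (s * t)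

lemma hls_of_unit {ι : Type*} (R : ι → ι → ℝ) (r K : ℝ) (hK : 0 ≤ K)
    (hR : ∀ x y, 0 ≤ R x y)
    (hu : ∀ (a b : ι → ℝ), (∀ x, 0 ≤ a x) → (∀ x, 0 ≤ b x) →
      ∑' y, ENNReal.ofReal (a y ^ r) ≤ 1 → ∑' y, ENNReal.ofReal (b y ^ r) ≤ 1 →
      ∑' x, ∑' y, ENNReal.ofReal (R x y * (a x * b y)) ≤ ENNReal.ofReal K) :
    HLSProp R r K := by
  intro a b s t hs ht ha hb hsa hsb
  have norml : ∀ (a : ι → ℝ) (s : ℝ), 0 < s → (Summable fun x => |a x| ^ r) →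
      ∑' x, |a x| ^ r ≤ s ^ r → ∑' y, ENNReal.ofReal ((|a y| / s) ^ r) ≤ 1 := by
    intro a s hs ha hsa
    have e : ∀ y, (|a y| / s) ^ r = (s ^ r)⁻¹ * |a y| ^ r := fun y => by
      rw [Real.div_rpow (abs_nonneg _) hs.le]; field_simp
    simp_rw [e]
    rw [← ENNReal.ofReal_tsum_of_nonneg (fun y => by positivity) (ha.mul_left _), tsum_mul_left,
      ENNReal.ofReal_le_one, inv_mul_le_iff₀ (by positivity), mul_one]
    exact hsa
  have h := hu (fun x => |a x| / s) (fun x => |b x| / t) (fun x => by positivity)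
    (fun x => by positivity) (norml a s hs ha hsa) (norml b t ht hb hsb)
  have e : ∀ z : ι × ι, R z.1 z.2 * (|a z.1| * |b z.2|)
      = (s * t) * (R z.1 z.2 * (|a z.1| / s * (|b z.2| / t))) := fun z => by field_simp
  rw [← ENNReal.tsum_prod (f := fun x y => ENNReal.ofReal (R x y * (|a x| / s * (|b y| / t))))] at h
  have hn : ∀ z : ι × ι, 0 ≤ R z.1 z.2 * (|a z.1| / s * (|b z.2| / t)) := fun z =>
    mul_nonneg (hR _ _) (by positivity)
  have hsum : Summable fun z : ι × ι => R z.1 z.2 * (|a z.1| / s * (|b z.2| / t)) := by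
    have := ENNReal.summable_toReal (ne_top_of_le_ne_top ENNReal.ofReal_ne_top h)
    refine this.congr fun z => ?_
    exact ENNReal.toReal_ofReal (hn z)
  simp_rw [e]
  refine ⟨hsum.mul_left _, ?_⟩
  rw [tsum_mul_left, mul_comm K]
  apply mul_le_mul_of_nonneg_left _ (by positivity)
  rw [← ENNReal.ofReal_tsum_of_nonneg hn hsum] at h
  exact (ENNReal.ofReal_le_ofReal_iff hK).1 h

lemma vanish {ι : Type*} (k g : ℕ → ι → ℝ) (D : ι → ℝ) (T : ℝ)
    (hk : ∀ n x, 0 ≤ k n x) (hg : ∀ n x, 0 ≤ g n x)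
    (hgs : ∀ n, Summable (g n)) (hgT : ∀ n, ∑' x, g n x ≤ T) (hD : Summable D)
    (hD0 : ∀ x, 0 ≤ D x)
    (hle : ∀ ε > 0, ∃ C : ℝ, ∀ n x, k n x ≤ ε * g n x + C * D x)
    (hlim : ∀ x, Tendsto (fun n => k n x) atTop (𝓝 0)) :
    (∀ n, Summable (k n)) ∧ Tendsto (fun n => ∑' x, k n x) atTop (𝓝 0) := by
  have hs : ∀ n, Summable (k n) := fun n => by
    obtain ⟨C, hC⟩ := hle 1 one_pos
    exact Summable.of_nonneg_of_le (hk n) (hC n) (((hgs n).mul_left 1).add (hD.mul_left C))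
  have hT : 0 ≤ T := (tsum_nonneg (hg 0)).trans (hgT 0)
  refine ⟨hs, ?_⟩
  rw [Metric.tendsto_atTop]
  intro ε hε
  obtain ⟨C, hC⟩ := hle (ε / (2 * (T + 1))) (by positivity)
  set η := ε / (2 * (T + 1)) with hη
  have hηp : 0 < η := by positivity
  have hm0 : ∀ n x, 0 ≤ max (k n x - η * g n x) 0 := fun n x => le_max_right _ _
  have hmle : ∀ n x, max (k n x - η * g n x) 0 ≤ |C| * D x := fun n x => by
    apply max_le
    · have := hC n x
      have := mul_le_mul_of_nonneg_right (le_abs_self C) (hD0 x)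
      linarith
    · exact mul_nonneg (abs_nonneg _) (hD0 x)
  have hms : ∀ n, Summable fun x => max (k n x - η * g n x) 0 := fun n =>
    Summable.of_nonneg_of_le (hm0 n) (hmle n) (hD.mul_left _)
  have hm : Tendsto (fun n => ∑' x, max (k n x - η * g n x) 0) atTop (𝓝 (∑' _ : ι, (0 : ℝ))) := by
    refine tendsto_tsum_of_dominated_convergence (bound := fun x => |C| * D x) (hD.mul_left _) ?_ ?_
    · intro x
      refine squeeze_zero (fun n => hm0 n x) (fun n => ?_) (hlim x)
      exact max_le (by have := mul_nonneg hηp.le (hg n x); linarith) (hk n x)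
    · refine Eventually.of_forall fun n x => ?_
      rw [Real.norm_eq_abs, abs_of_nonneg (hm0 n x)]
      exact hmle n x
  rw [tsum_zero, Metric.tendsto_atTop] at hm
  obtain ⟨n0, hn0⟩ := hm (ε / 2) (by positivity)
  refine ⟨n0, fun n hn => ?_⟩
  have h1 := hn0 n hn
  rw [Real.dist_eq, sub_zero, abs_of_nonneg (tsum_nonneg (hm0 n))] at h1
  rw [Real.dist_eq, sub_zero, abs_of_nonneg (tsum_nonneg (hk n))]
  have h2 : ∑' x, k n x ≤ ∑' x, (η * g n x + max (k n x - η * g n x) 0) := by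
    refine (hs n).tsum_le_tsum (fun x => ?_) (((hgs n).mul_left _).add (hms n))
    have := le_max_left (k n x - η * g n x) 0
    linarith
  rw [((hgs n).mul_left _).tsum_add (hms n), tsum_mul_left] at h2
  have h3 : η * ∑' x, g n x ≤ ε / 2 := by
    calc _ ≤ η * (T + 1) := mul_le_mul_of_nonneg_left (by linarith [hgT n]) hηp.le
      _ = _ := by rw [hη]; field_simp
  linarith

/-- The bilinear form attached to a kernel. -/
def bil {ι : Type*} (R : ι → ι → ℝ) (a b : ι → ℝ) : ℝ :=
  ∑' z : ι × ι, R z.1 z.2 * (a z.1 * b z.2)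

lemma bil_symm {ι : Type*} (R : ι → ι → ℝ) (hsymm : ∀ x y, R x y = R y x) (a b : ι → ℝ) :
    bil R a b = bil R b a := by
  unfold bil
  rw [← (Equiv.prodComm ι ι).tsum_eq]
  refine tsum_congr fun z => ?_
  simp only [Equiv.prodComm_apply, Prod.fst_swap, Prod.snd_swap]
  rw [hsymm]; ring

lemma hls_abs_summable {ι : Type*} {R : ι → ι → ℝ} {r K : ℝ} (hr : 1 < r) (hH : HLSProp R r K)
    {a b : ι → ℝ} (ha : Summable fun x => |a x| ^ r) (hb : Summable fun x => |b x| ^ r) :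
    Summable fun z : ι × ι => R z.1 z.2 * (|a z.1| * |b z.2|) := by
  have h : ∀ A : ℝ, 0 ≤ A → A ≤ ((A + 1) ^ (1 / r)) ^ r := fun A hA => by
    rw [← Real.rpow_mul (by positivity), one_div_mul_cancel (by linarith), Real.rpow_one]; linarith
  have ha0 : 0 ≤ ∑' x, |a x| ^ r := tsum_nonneg fun x => by positivity
  have hb0 : 0 ≤ ∑' x, |b x| ^ r := tsum_nonneg fun x => by positivity
  exact (hH a b _ _ (by positivity) (by positivity) ha hb (h _ ha0) (h _ hb0)).1

lemma hls_summable {ι : Type*} {R : ι → ι → ℝ} {r K : ℝ} (hr : 1 < r) (hH : HLSProp R r K)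
    (hR : ∀ x y, 0 ≤ R x y)
    {a b : ι → ℝ} (ha : Summable fun x => |a x| ^ r) (hb : Summable fun x => |b x| ^ r) :
    Summable fun z : ι × ι => R z.1 z.2 * (a z.1 * b z.2) := by
  refine Summable.of_abs ((hls_abs_summable hr hH ha hb).congr fun z => ?_)
  rw [abs_mul, abs_mul, abs_of_nonneg (hR _ _)]

lemma bil_abs_le {ι : Type*} {R : ι → ι → ℝ} {r K : ℝ} (hr : 1 < r) (hH : HLSProp R r K)
    (hR : ∀ x y, 0 ≤ R x y)
    {a b : ι → ℝ} (ha : Summable fun x => |a x| ^ r) (hb : Summable fun x => |b x| ^ r) :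
    |bil R a b| ≤ ∑' z : ι × ι, R z.1 z.2 * (|a z.1| * |b z.2|) := by
  have e : ∀ z : ι × ι, R z.1 z.2 * (|a z.1| * |b z.2|) = ‖R z.1 z.2 * (a z.1 * b z.2)‖ :=
    fun z => by rw [Real.norm_eq_abs, abs_mul, abs_mul, abs_of_nonneg (hR _ _)]
  have hs := hls_abs_summable hr hH ha hb
  simp_rw [e] at hs ⊢
  exact norm_tsum_le_tsum_norm hs

lemma hls_small {ι : Type*} {R : ι → ι → ℝ} {r K : ℝ} (hr : 1 < r) (hK : 0 ≤ K)
    (hH : HLSProp R r K) (hR : ∀ x y, 0 ≤ R x y) (k f : ℕ → ι → ℝ) (T : ℝ)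
    (hk : ∀ n, Summable fun x => |k n x| ^ r) (hf : ∀ n, Summable fun x => |f n x| ^ r)
    (hfT : ∀ n, ∑' x, |f n x| ^ r ≤ T)
    (hk0 : Tendsto (fun n => ∑' x, |k n x| ^ r) atTop (𝓝 0)) :
    Tendsto (fun n => bil R (k n) (f n)) atTop (𝓝 0) := by
  have hT : 0 ≤ T := (tsum_nonneg fun x => by positivity).trans (hfT 0)
  set t := (T + 1) ^ (1 / r) with ht
  have htp : 0 < t := by positivity
  have hTt : T ≤ t ^ r := by
    rw [ht, ← Real.rpow_mul (by positivity), one_div_mul_cancel (by linarith), Real.rpow_one]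
    linarith
  rw [Metric.tendsto_atTop]
  intro ε hε
  set s := ε / (2 * ((K + 1) * t)) with hs
  have hsp : 0 < s := by positivity
  rw [Metric.tendsto_atTop] at hk0
  obtain ⟨n0, hn0⟩ := hk0 (s ^ r) (by positivity)
  refine ⟨n0, fun n hn => ?_⟩
  have h1 := hn0 n hn
  rw [Real.dist_eq, sub_zero, abs_of_nonneg (tsum_nonneg fun x => by positivity)] at h1
  rw [Real.dist_eq, sub_zero]
  have h2 := (hH (k n) (f n) s t hsp htp (hk n) (hf n) h1.le ((hfT n).trans hTt)).2
  have h3 := bil_abs_le hr hH hR (hk n) (hf n)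
  have h4 : K * (s * t) ≤ (K + 1) * (s * t) :=
    mul_le_mul_of_nonneg_right (by linarith) (by positivity)
  have h5 : (K + 1) * (s * t) = ε / 2 := by rw [hs]; field_simp
  linarith

lemma potential_memlp {ι : Type*} {R : ι → ι → ℝ} {r r' K : ℝ} (hr : r.HolderConjugate r')
    (hK : 0 ≤ K) (hH : HLSProp R r K) (hR : ∀ x y, 0 ≤ R x y) (f : ι → ℝ)
    (hf : Summable fun x => |f x| ^ r) :
    Summable fun x => (∑' y, R x y * |f y|) ^ r' := by
  classical
  set c : ι → ℝ := fun x => ∑' y, R x y * |f y| with hc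
  have hc0 : ∀ x, 0 ≤ c x := fun x => tsum_nonneg fun y => mul_nonneg (hR _ _) (abs_nonneg _)
  have hfs0 : 0 ≤ ∑' x, |f x| ^ r := tsum_nonneg fun x => by positivity
  set t := (∑' x, |f x| ^ r + 1) ^ (1 / r) with ht
  have htp : 0 < t := by positivity
  have hTt : ∑' x, |f x| ^ r ≤ t ^ r := by
    rw [ht, ← Real.rpow_mul (by positivity), one_div_mul_cancel hr.ne_zero, Real.rpow_one]
    linarith
  refine summable_of_sum_le (c := (K * t) ^ r') (fun x => Real.rpow_nonneg (hc0 x) _) fun F => ?_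
  set A := ∑ x ∈ F, c x ^ r' with hA
  have hA0 : 0 ≤ A := Finset.sum_nonneg fun x _ => Real.rpow_nonneg (hc0 x) _
  rcases hA0.eq_or_lt with h0 | h0
  · rw [← h0]; positivity
  set g : ι → ℝ := fun x => if x ∈ F then c x ^ (r' - 1) else 0 with hg
  have hg0 : ∀ x, 0 ≤ g x := fun x => by
    simp only [hg]; split_ifs
    · exact Real.rpow_nonneg (hc0 x) _
    · exact le_rfl
  have hgr : ∀ x, |g x| ^ r = if x ∈ F then c x ^ r' else 0 := fun x => by
    rw [abs_of_nonneg (hg0 x)]; simp only [hg]; split_ifs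
    · rw [← Real.rpow_mul (hc0 x), hr.symm.sub_one_mul_conj]
    · exact Real.zero_rpow hr.ne_zero
  have hgs : Summable fun x => |g x| ^ r := by
    refine summable_of_ne_finset_zero (s := F) fun x hx => ?_
    rw [hgr, if_neg hx]
  have hgt : ∑' x, |g x| ^ r = A := by
    rw [tsum_eq_sum (s := F) fun x hx => by rw [hgr, if_neg hx]]
    exact Finset.sum_congr rfl fun x hx => by rw [hgr, if_pos hx]
  have hAr : A = (A ^ (1 / r)) ^ r := by
    rw [← Real.rpow_mul hA0, one_div_mul_cancel hr.ne_zero, Real.rpow_one]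
  obtain ⟨h1, h2⟩ := hH g f (A ^ (1 / r)) t (by positivity) htp hgs hf
    (by rw [hgt, ← hAr]) hTt
  rw [h1.tsum_prod] at h2
  have e : ∀ x, ∑' y, R x y * (|g x| * |f y|) = if x ∈ F then c x ^ r' else 0 := fun x => by
    have : ∀ y, R x y * (|g x| * |f y|) = g x * (R x y * |f y|) := fun y => by
      rw [abs_of_nonneg (hg0 x)]; ring
    simp_rw [this]
    rw [tsum_mul_left]
    change g x * c x = _
    simp only [hg]; split_ifs
    · rcases (hc0 x).eq_or_lt with h | h
      · rw [← h, mul_zero, Real.zero_rpow hr.symm.ne_zero]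
      · rw [Real.rpow_sub_one h.ne']; field_simp
    · simp
  simp_rw [e] at h2
  rw [tsum_eq_sum (s := F) fun x hx => if_neg hx,
    Finset.sum_congr rfl (g := fun x => c x ^ r') fun x hx => if_pos hx, ← hA] at h2
  have h3 : A ^ (1 / r') ≤ K * t := by
    have e1 : A = A ^ (1 / r') * A ^ (1 / r) := by
      rw [← Real.rpow_add h0]
      have := hr.symm.inv_add_inv_eq_one
      rw [one_div, one_div, this, Real.rpow_one]
    have hp : 0 < A ^ (1 / r) := by positivity
    have : A ^ (1 / r') * A ^ (1 / r) ≤ (K * t) * A ^ (1 / r) := by rw [← e1]; linarith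
    exact le_of_mul_le_mul_right this hp
  calc A = (A ^ (1 / r')) ^ r' := by
        rw [← Real.rpow_mul hA0, one_div_mul_cancel hr.symm.ne_zero, Real.rpow_one]
    _ ≤ _ := Real.rpow_le_rpow (by positivity) h3 hr.symm.pos.le

lemma hls_weak {ι : Type*} {R : ι → ι → ℝ} {r r' K : ℝ} (hr : r.HolderConjugate r')
    (hK : 0 ≤ K) (hH : HLSProp R r K) (hR : ∀ x y, 0 ≤ R x y) (f : ι → ℝ)
    (hf : Summable fun x => |f x| ^ r) (g : ℕ → ι → ℝ) (T : ℝ)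
    (hg : ∀ n, Summable fun x => |g n x| ^ r) (hgT : ∀ n, ∑' x, |g n x| ^ r ≤ T)
    (hg0 : ∀ x, Tendsto (fun n => g n x) atTop (𝓝 0)) :
    Tendsto (fun n => bil R (g n) f) atTop (𝓝 0) := by
  have hcs := potential_memlp hr hK hH hR f hf
  set c : ι → ℝ := fun x => ∑' y, R x y * |f y| with hc
  have hc0 : ∀ x, 0 ≤ c x := fun x => tsum_nonneg fun y => mul_nonneg (hR _ _) (abs_nonneg _)
  have hv := (vanish (fun n x => c x * |g n x|) (fun n x => |g n x| ^ r) (fun x => c x ^ r') T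
    (fun n x => mul_nonneg (hc0 x) (abs_nonneg _)) (fun n x => by positivity) hg hgT hcs
    (fun x => Real.rpow_nonneg (hc0 x) _) ?_ ?_).2
  · refine squeeze_zero_norm (fun n => ?_) hv
    rw [Real.norm_eq_abs]
    refine (bil_abs_le hr.lt hH hR (hg n) hf).trans (le_of_eq ?_)
    rw [(hls_abs_summable hr.lt hH (hg n) hf).tsum_prod]
    refine tsum_congr fun x => ?_
    have : ∀ y, R x y * (|g n x| * |f y|) = |g n x| * (R x y * |f y|) := fun y => by ring
    simp_rw [this]
    rw [tsum_mul_left, mul_comm]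
  · intro ε hε
    set τ := ε ^ (1 / (r - 1)) with hτ
    have hτp : 0 < τ := by positivity
    refine ⟨τ⁻¹, fun n x => ?_⟩
    have h := young_weighted hr τ (c x) (|g n x|) hτp (hc0 x) (abs_nonneg _)
    have e : τ ^ (r - 1) = ε := by
      rw [hτ, ← Real.rpow_mul hε.le, one_div_mul_cancel hr.sub_one_ne_zero, Real.rpow_one]
    rwa [e] at h
  · intro x
    have := ((hg0 x).abs).const_mul (c x)
    simpa using this

lemma add_rpow_le_two {q : ℝ} (hq : 0 ≤ q) (a b : ℝ) (ha : 0 ≤ a) (hb : 0 ≤ b) :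
    (a + b) ^ q ≤ 2 ^ q * (a ^ q + b ^ q) := by
  have h1 : 0 ≤ a ^ q := by positivity
  have h2 : 0 ≤ b ^ q := by positivity
  rcases le_total a b with h | h
  · calc (a + b) ^ q ≤ (2 * b) ^ q := Real.rpow_le_rpow (by positivity) (by linarith) hq
      _ = 2 ^ q * b ^ q := Real.mul_rpow (by norm_num) hb
      _ ≤ _ := mul_le_mul_of_nonneg_left (by linarith) (by positivity)
  · calc (a + b) ^ q ≤ (2 * a) ^ q := Real.rpow_le_rpow (by positivity) (by linarith) hq
      _ = 2 ^ q * a ^ q := Real.mul_rpow (by norm_num) ha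
      _ ≤ _ := mul_le_mul_of_nonneg_left (by linarith) (by positivity)

lemma elem_ineq {p : ℝ} (hp : 1 ≤ p) (ε : ℝ) (hε : 0 < ε) :
    ∃ C : ℝ, 0 ≤ C ∧ ∀ a b : ℝ, |(|a + b| ^ p - |a| ^ p)| ≤ ε * |a| ^ p + C * |b| ^ p := by
  have hc : ContinuousAt (fun x : ℝ => x ^ p) 1 := Real.continuousAt_rpow_const 1 p (Or.inl one_ne_zero)
  rw [Metric.continuousAt_iff] at hc
  obtain ⟨δ, hδ, hcd⟩ := hc ε hε
  refine ⟨(2 / δ + 1) ^ p, by positivity, fun a b => ?_⟩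
  by_cases hab : |b| ≤ δ / 2 * |a|
  · have hC : 0 ≤ (2 / δ + 1) ^ p * |b| ^ p := by positivity
    by_cases ha : a = 0
    · have hb : b = 0 := by
        rw [ha, abs_zero, mul_zero] at hab
        exact abs_eq_zero.1 (le_antisymm hab (abs_nonneg _))
      subst ha hb
      simp [Real.zero_rpow (by linarith : p ≠ 0)]
    · have hap : 0 < |a| := abs_pos.2 ha
      have h1 : dist (|a + b| / |a|) 1 < δ := by
        rw [Real.dist_eq]
        have : |a + b| / |a| - 1 = (|a + b| - |a|) / |a| := by field_simp
        rw [this, abs_div, abs_abs, div_lt_iff₀ hap]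
        have h := abs_abs_sub_abs_le (a + b) a
        have e : a + b - a = b := by ring
        rw [e] at h
        have : δ / 2 * |a| < δ * |a| := mul_lt_mul_of_pos_right (by linarith) hap
        linarith
      have h2 := hcd h1
      rw [Real.dist_eq, Real.one_rpow, Real.div_rpow (abs_nonneg _) (abs_nonneg _)] at h2
      have hpp : 0 < |a| ^ p := by positivity
      have e : |a + b| ^ p - |a| ^ p = (|a + b| ^ p / |a| ^ p - 1) * |a| ^ p := by field_simp
      rw [e, abs_mul, abs_of_pos hpp]
      have := mul_le_mul_of_nonneg_right h2.le hpp.le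
      linarith
  · push Not at hab
    have hE : 0 ≤ ε * |a| ^ p := by positivity
    have ha : |a| ≤ 2 / δ * |b| := by
      rw [div_mul_eq_mul_div, le_div_iff₀ hδ]; linarith
    have h1 : |a| ^ p ≤ (2 / δ + 1) ^ p * |b| ^ p := by
      rw [← Real.mul_rpow (by positivity) (abs_nonneg _)]
      exact Real.rpow_le_rpow (abs_nonneg _) (by linarith [abs_nonneg b]) (by linarith)
    have h2 : |a + b| ^ p ≤ (2 / δ + 1) ^ p * |b| ^ p := by
      rw [← Real.mul_rpow (by positivity) (abs_nonneg _)]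
      exact Real.rpow_le_rpow (abs_nonneg _) (by linarith [abs_add_le a b]) (by linarith)
    have h3 : 0 ≤ |a| ^ p := by positivity
    have h4 : 0 ≤ |a + b| ^ p := by positivity
    rw [abs_le]; constructor <;> linarith

lemma bil_add3_right {ι : Type*} {R : ι → ι → ℝ} {r K : ℝ} (hr : 1 < r) (hH : HLSProp R r K)
    (hR : ∀ x y, 0 ≤ R x y) {a b b₁ b₂ b₃ : ι → ℝ} (h : ∀ x, b x = b₁ x + b₂ x + b₃ x)
    (ha : Summable fun x => |a x| ^ r) (h₁ : Summable fun x => |b₁ x| ^ r)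
    (h₂ : Summable fun x => |b₂ x| ^ r) (h₃ : Summable fun x => |b₃ x| ^ r) :
    bil R a b = bil R a b₁ + bil R a b₂ + bil R a b₃ := by
  have s1 := hls_summable hr hH hR ha h₁
  have s2 := hls_summable hr hH hR ha h₂
  have s3 := hls_summable hr hH hR ha h₃
  unfold bil
  rw [← s1.tsum_add s2, ← (s1.add s2).tsum_add s3]
  refine tsum_congr fun z => ?_
  rw [h]; ring

lemma ind_summable {ι : Type*} {r : ℝ} (hr : 0 < r) (Ω : Set ι) {a : ι → ℝ}
    (ha : Summable fun x => |a x| ^ r) :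
    (Summable fun x => |Ω.indicator a x| ^ r) ∧
      ∑' x, |Ω.indicator a x| ^ r ≤ ∑' x, |a x| ^ r := by
  have hle : ∀ x, |Ω.indicator a x| ^ r ≤ |a x| ^ r := fun x => by
    by_cases h : x ∈ Ω
    · rw [Set.indicator_of_mem h]
    · rw [Set.indicator_of_notMem h, abs_zero, Real.zero_rpow hr.ne']; positivity
  have hs : Summable fun x => |Ω.indicator a x| ^ r :=
    Summable.of_nonneg_of_le (fun x => by positivity) hle ha
  exact ⟨hs, hs.tsum_le_tsum hle ha⟩

lemma energy_eq_bil {ι : Type*} {R : ι → ι → ℝ} {r K : ℝ} (hr : 1 < r) (hH : HLSProp R r K)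
    (hR : ∀ x y, 0 ≤ R x y) (Ω : Set ι) (f : ι → ℝ) (hf : Summable fun x => |f x| ^ r) :
    ∑' x : Ω, (∑' y, R x y * f y) * f x = bil R (Ω.indicator f) f := by
  unfold bil
  rw [(hls_summable hr hH hR (ind_summable (by linarith) Ω hf).1 hf).tsum_prod,
    tsum_subtype Ω (fun x => (∑' y, R x y * f y) * f x)]
  refine tsum_congr fun x => ?_
  have : ∀ y, R x y * (Ω.indicator f x * f y) = Ω.indicator f x * (R x y * f y) := fun y => by ring
  simp_rw [this]
  rw [tsum_mul_left]
  by_cases h : x ∈ Ω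
  · rw [Set.indicator_of_mem h, Set.indicator_of_mem h, mul_comm]
  · rw [Set.indicator_of_notMem h, Set.indicator_of_notMem h, zero_mul]

lemma brezisLieb_abstract {ι : Type*} {R : ι → ι → ℝ} {r r' K p : ℝ}
    (hr : r.HolderConjugate r') (hK : 0 ≤ K) (hH : HLSProp R r K) (hR : ∀ x y, 0 ≤ R x y)
    (hsymm : ∀ x y, R x y = R y x) (hp : 1 ≤ p) (Ω : Set ι)
    (u : ℕ → ι → ℝ) (v : ι → ℝ) (T : ℝ)
    (hu : ∀ n, Summable fun x => |u n x| ^ (p * r)) (huT : ∀ n, ∑' x, |u n x| ^ (p * r) ≤ T)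
    (hpt : ∀ x, Tendsto (fun n => u n x) atTop (𝓝 (v x))) :
    Tendsto (fun n => (∑' x : Ω, (∑' y, R x y * |u n y| ^ p) * |u n x| ^ p) -
        ∑' x : Ω, (∑' y, R x y * |u n y - v y| ^ p) * |u n x - v x| ^ p) atTop
      (𝓝 (∑' x : Ω, (∑' y, R x y * |v y| ^ p) * |v x| ^ p)) := by
  have hp0 : 0 < p := by linarith
  have hr0 : 0 < r := hr.pos
  have hq0 : 0 < p * r := by positivity
  -- the limit lies in the space
  have hvF : ∀ F : Finset ι, ∑ x ∈ F, |v x| ^ (p * r) ≤ T := fun F => by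
    have ht : Tendsto (fun n => ∑ x ∈ F, |u n x| ^ (p * r)) atTop
        (𝓝 (∑ x ∈ F, |v x| ^ (p * r))) :=
      tendsto_finsetSum _ fun x _ => ((hpt x).abs).rpow_const (Or.inr hq0.le)
    refine le_of_tendsto' ht fun n => ?_
    exact ((hu n).sum_le_tsum F (fun x _ => by positivity)).trans (huT n)
  have hv : Summable fun x => |v x| ^ (p * r) :=
    summable_of_sum_le (fun x => by positivity) hvF
  have hvT : ∑' x, |v x| ^ (p * r) ≤ T := hv.tsum_le_of_sum_le hvF
  have hT : 0 ≤ T := (tsum_nonneg fun x => by positivity).trans hvT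
  have habs : ∀ w : ℝ, |(|w| ^ p)| ^ r = |w| ^ (p * r) := fun w => by
    rw [abs_of_nonneg (by positivity), ← Real.rpow_mul (abs_nonneg _)]
  have hd : ∀ n x, |u n x - v x| ^ (p * r)
      ≤ 2 ^ (p * r) * (|u n x| ^ (p * r) + |v x| ^ (p * r)) := fun n x =>
    (Real.rpow_le_rpow (abs_nonneg _) (abs_sub _ _) hq0.le).trans
      (add_rpow_le_two hq0.le _ _ (abs_nonneg _) (abs_nonneg _))
  have hds : ∀ n, Summable fun x => 2 ^ (p * r) * (|u n x| ^ (p * r) + |v x| ^ (p * r)) :=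
    fun n => ((hu n).add hv).mul_left _
  have hdsum : ∀ n, Summable fun x => |u n x - v x| ^ (p * r) := fun n =>
    Summable.of_nonneg_of_le (fun x => by positivity) (hd n) (hds n)
  have hdT : ∀ n, ∑' x, |u n x - v x| ^ (p * r) ≤ 2 ^ (p * r) * (T + T) := fun n => by
    refine ((hdsum n).tsum_le_tsum (hd n) (hds n)).trans ?_
    rw [tsum_mul_left, (hu n).tsum_add hv]
    exact mul_le_mul_of_nonneg_left (add_le_add (huT n) hvT) (by positivity)
  set T' := 2 ^ (p * r) * (T + T) with hT'
  set f : ℕ → ι → ℝ := fun n x => |u n x| ^ p with hf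
  set g : ℕ → ι → ℝ := fun n x => |u n x - v x| ^ p with hg
  set w : ι → ℝ := fun x => |v x| ^ p with hw
  set k : ℕ → ι → ℝ := fun n x => f n x - g n x - w x with hk
  have sf : ∀ n, Summable fun x => |f n x| ^ r := fun n => by
    simp only [hf, habs]; exact hu n
  have sfT : ∀ n, ∑' x, |f n x| ^ r ≤ T := fun n => by
    simp only [hf, habs]; exact huT n
  have sg : ∀ n, Summable fun x => |g n x| ^ r := fun n => by
    simp only [hg, habs]; exact hdsum n
  have sgT : ∀ n, ∑' x, |g n x| ^ r ≤ T' := fun n => by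
    simp only [hg, habs]; exact hdT n
  have sw : Summable fun x => |w x| ^ r := by
    simp only [hw, habs]; exact hv
  have hg0 : ∀ x, Tendsto (fun n => g n x) atTop (𝓝 0) := fun x => by
    have h := ((((hpt x).sub_const (v x)).abs).rpow_const (p := p) (Or.inr hp0.le))
    simpa [Real.zero_rpow hp0.ne'] using h
  have hk0 : ∀ x, Tendsto (fun n => |k n x| ^ r) atTop (𝓝 0) := fun x => by
    have h1 : Tendsto (fun n => f n x) atTop (𝓝 (w x)) :=
      ((hpt x).abs).rpow_const (Or.inr hp0.le)
    have h2 := ((((h1.sub (hg0 x)).sub_const (w x))).abs).rpow_const (p := r) (Or.inr hr0.le)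
    simpa [Real.zero_rpow hr0.ne'] using h2
  obtain ⟨sk, hkt⟩ := vanish (fun n x => |k n x| ^ r) (fun n x => |g n x| ^ r)
    (fun x => |w x| ^ r) T' (fun n x => by positivity) (fun n x => by positivity) sg sgT sw
    (fun x => by positivity) (by
      intro ε hε
      obtain ⟨C, hC0, hC⟩ := elem_ineq hp (ε ^ (1 / r) / 2) (by positivity)
      refine ⟨2 ^ r * (C + 1) ^ r, fun n x => ?_⟩
      have hgn : 0 ≤ g n x := by simp only [hg]; positivity
      have hwn : 0 ≤ w x := by simp only [hw]; positivity
      have h1 := hC (u n x - v x) (v x)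
      rw [sub_add_cancel] at h1
      have h2 : |k n x| ≤ ε ^ (1 / r) / 2 * g n x + (C + 1) * w x := by
        have : |k n x| ≤ |f n x - g n x| + |w x| := abs_sub _ _
        rw [abs_of_nonneg hwn] at this
        change |f n x - g n x| ≤ ε ^ (1 / r) / 2 * g n x + C * w x at h1
        linarith
      refine (Real.rpow_le_rpow (abs_nonneg _) h2 hr0.le).trans ?_
      refine (add_rpow_le_two hr0.le _ _ (by positivity) (by positivity)).trans (le_of_eq ?_)
      rw [abs_of_nonneg hgn, abs_of_nonneg hwn, Real.mul_rpow (by positivity) hgn,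
        Real.mul_rpow (by positivity) hwn, Real.div_rpow (by positivity) (by norm_num),
        ← Real.rpow_mul hε.le, one_div_mul_cancel hr0.ne', Real.rpow_one]
      have : (0 : ℝ) < 2 ^ r := by positivity
      field_simp) hk0
  have e1 : ∀ n, ∑' x : Ω, (∑' y, R x y * |u n y| ^ p) * |u n x| ^ p
      = bil R (Ω.indicator (f n)) (f n) := fun n => energy_eq_bil hr.lt hH hR Ω (f n) (sf n)
  have e2 : ∀ n, ∑' x : Ω, (∑' y, R x y * |u n y - v y| ^ p) * |u n x - v x| ^ p
      = bil R (Ω.indicator (g n)) (g n) := fun n => energy_eq_bil hr.lt hH hR Ω (g n) (sg n)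
  have e3 : ∑' x : Ω, (∑' y, R x y * |v y| ^ p) * |v x| ^ p
      = bil R (Ω.indicator w) w := energy_eq_bil hr.lt hH hR Ω w sw
  simp_rw [e1, e2, e3]
  have igs := fun n => (ind_summable hr0 Ω (sg n))
  have iks := fun n => (ind_summable hr0 Ω (sk n))
  have iws := (ind_summable hr0 Ω sw)
  have ifs := fun n => (ind_summable hr0 Ω (sf n))
  have hfd : ∀ n x, f n x = g n x + w x + k n x := fun n x => by simp only [hk]; ring
  have hfi : ∀ n x, Ω.indicator (f n) x
      = Ω.indicator (g n) x + Ω.indicator w x + Ω.indicator (k n) x := fun n x => by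
    by_cases h : x ∈ Ω
    · simp only [Set.indicator_of_mem h]; exact hfd n x
    · simp only [Set.indicator_of_notMem h]; ring
  have ident : ∀ n, bil R (Ω.indicator (f n)) (f n) - bil R (Ω.indicator (g n)) (g n)
      = bil R (Ω.indicator w) w + (bil R (Ω.indicator (g n)) w + bil R (g n) (Ω.indicator w)
        + bil R (Ω.indicator (k n)) (f n) + bil R (k n) (Ω.indicator (g n))
        + bil R (k n) (Ω.indicator w)) := fun n => by
    rw [bil_symm R hsymm (Ω.indicator (f n)), bil_add3_right hr.lt hH hR (hfi n) (sf n) (igs n).1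
      iws.1 (iks n).1, bil_symm R hsymm (f n), bil_symm R hsymm (f n), bil_symm R hsymm (f n),
      bil_add3_right hr.lt hH hR (hfd n) (igs n).1 (sg n) sw (sk n),
      bil_add3_right hr.lt hH hR (hfd n) iws.1 (sg n) sw (sk n),
      bil_symm R hsymm (g n) (Ω.indicator w), bil_symm R hsymm (k n) (Ω.indicator (g n)),
      bil_symm R hsymm (k n) (Ω.indicator w)]
    ring
  simp_rw [ident]
  have t1 : Tendsto (fun n => bil R (Ω.indicator (g n)) w) atTop (𝓝 0) := by
    refine hls_weak hr hK hH hR w sw (fun n => Ω.indicator (g n)) T' (fun n => (igs n).1)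
      (fun n => (igs n).2.trans (sgT n)) fun x => ?_
    by_cases h : x ∈ Ω
    · simp only [Set.indicator_of_mem h]; exact hg0 x
    · simp only [Set.indicator_of_notMem h]; exact tendsto_const_nhds
  have t2 : Tendsto (fun n => bil R (g n) (Ω.indicator w)) atTop (𝓝 0) :=
    hls_weak hr hK hH hR _ iws.1 g T' sg sgT hg0
  have t3 : Tendsto (fun n => bil R (Ω.indicator (k n)) (f n)) atTop (𝓝 0) :=
    hls_small hr.lt hK hH hR (fun n => Ω.indicator (k n)) f T (fun n => (iks n).1) sf sfT
      (squeeze_zero (fun n => tsum_nonneg fun x => by positivity) (fun n => (iks n).2) hkt)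
  have t4 : Tendsto (fun n => bil R (k n) (Ω.indicator (g n))) atTop (𝓝 0) :=
    hls_small hr.lt hK hH hR k (fun n => Ω.indicator (g n)) T' sk (fun n => (igs n).1)
      (fun n => (igs n).2.trans (sgT n)) hkt
  have t5 : Tendsto (fun n => bil R (k n) (Ω.indicator w)) atTop (𝓝 0) :=
    hls_small hr.lt hK hH hR k (fun _ => Ω.indicator w) _ sk (fun _ => iws.1)
      (fun _ => le_rfl) hkt
  have := ((((t1.add t2).add t3).add t4).add t5).const_add (bil R (Ω.indicator w) w)
  simpa using this

lemma wordDist_translate {G : Type*} [Group G] (S : Finset G) (x y : G) :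
    wordDist S x y = wordDist S 1 (x⁻¹ * y) := by
  unfold wordDist
  congr 1
  ext k
  simp only [Set.mem_ofPred_eq, one_mul, inv_mul_eq_iff_eq_mul]

lemma ball_count_s6 {G : Type*} [Group G] (S : Finset G) (N : ℕ) (C₁ C₂ : ℝ) (hC₁ : 0 < C₁)
    (hC₂ : 0 < C₂)
    (hgrowth : ∀ n : ℕ, 1 ≤ n →
      C₁ * (n : ℝ) ^ N ≤ (Nat.card {x : G // wordDist S 1 x ≤ n} : ℝ) ∧
      (Nat.card {x : G // wordDist S 1 x ≤ n} : ℝ) ≤ C₂ * (n : ℝ) ^ N)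
    (x : G) (s : ℝ) (hs : 0 < s) :
    ∑' y, (if 1 ≤ wordDist S x y ∧ (wordDist S x y : ℝ) ≤ s then (1 : ENNReal) else 0)
      ≤ ENNReal.ofReal (C₂ * s ^ (N : ℝ)) := by
  classical
  rcases lt_or_ge s 1 with h1 | h1
  · have : ∀ y, (if 1 ≤ wordDist S x y ∧ (wordDist S x y : ℝ) ≤ s then (1 : ENNReal) else 0) = 0 :=
      fun y => if_neg fun h => by
        have : (1 : ℝ) ≤ wordDist S x y := by exact_mod_cast h.1
        linarith [h.2]
    simp [this]
  · set n := ⌊s⌋₊ with hn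
    have hn1 : 1 ≤ n := Nat.one_le_floor_iff s |>.2 h1
    obtain ⟨hl, hup⟩ := hgrowth n hn1
    have hpos : 0 < Nat.card {x : G // wordDist S 1 x ≤ n} := by
      have : (0 : ℝ) < n := by exact_mod_cast hn1
      have : (0 : ℝ) < Nat.card {x : G // wordDist S 1 x ≤ n} :=
        lt_of_lt_of_le (by positivity) hl
      exact_mod_cast this
    have hfin : Finite {x : G // wordDist S 1 x ≤ n} := Nat.finite_of_card_ne_zero hpos.ne'
    have := Fintype.ofFinite {x : G // wordDist S 1 x ≤ n}
    calc _ ≤ ∑' y, (fun z => if wordDist S 1 z ≤ n then (1 : ENNReal) else 0)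
            (Equiv.mulLeft x⁻¹ y) := by
          refine ENNReal.tsum_le_tsum fun y => ?_
          simp only [Equiv.coe_mulLeft, ← wordDist_translate]
          by_cases h : 1 ≤ wordDist S x y ∧ (wordDist S x y : ℝ) ≤ s
          · rw [if_pos h, if_pos (Nat.le_floor h.2)]
          · rw [if_neg h]; exact zero_le
      _ = ∑' z, if wordDist S 1 z ≤ n then (1 : ENNReal) else 0 :=
          (Equiv.mulLeft x⁻¹).tsum_eq (fun z => if wordDist S 1 z ≤ n then (1 : ENNReal) else 0)
      _ = ∑' z : {x : G | wordDist S 1 x ≤ n}, (1 : ENNReal) := by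
          rw [tsum_subtype {x : G | wordDist S 1 x ≤ n} (fun _ => (1 : ENNReal))]
          refine tsum_congr fun z => ?_
          simp [Set.indicator]
      _ = ((Nat.card {x : G // wordDist S 1 x ≤ n} : ℕ) : ENNReal) := by
          rw [ENNReal.tsum_const, mul_one]
          change ((ENat.card {x : G // wordDist S 1 x ≤ n} : ℕ∞) : ENNReal) = _
          rw [ENat.card_eq_coe_natCard]; simp
      _ = ENNReal.ofReal (Nat.card {x : G // wordDist S 1 x ≤ n} : ℝ) := by
          rw [ENNReal.ofReal_natCast]
      _ ≤ _ := by
          apply ENNReal.ofReal_le_ofReal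
          refine hup.trans (mul_le_mul_of_nonneg_left ?_ hC₂.le)
          rw [Real.rpow_natCast]
          exact pow_le_pow_left₀ (by positivity) (Nat.floor_le hs.le) _

theorem brezisLieb_nonlocal
    [Group G] [Countable G]
    (S : Finset G) (hS_gen : Subgroup.closure (S : Set G) = ⊤)
    (hS_sym : ∀ s ∈ S, s⁻¹ ∈ S) (hS_e : (1 : G) ∉ S)
    (N : ℕ) (hN : 3 ≤ N)
    (C₁ C₂ : ℝ) (hC₁ : 0 < C₁) (hC₂ : 0 < C₂)
    (hgrowth : ∀ n : ℕ, 1 ≤ n →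
      C₁ * (n : ℝ) ^ N ≤ (Nat.card {x : G // wordDist S 1 x ≤ n} : ℝ) ∧
      (Nat.card {x : G // wordDist S 1 x ≤ n} : ℝ) ≤ C₂ * (n : ℝ) ^ N)
    (α : ℝ) (hα : 0 < α) (hαN : α < N)
    (Rα : G → G → ℝ) (hR_nonneg : ∀ x y, 0 ≤ Rα x y)
    (hR_symm : ∀ x y, Rα x y = Rα y x)
    (c₁ c₂ : ℝ) (hc₁ : 0 < c₁) (hc₂ : 0 < c₂)
    (hR_low : ∀ x y : G, x ≠ y → c₁ * (wordDist S x y : ℝ) ^ (α - (N : ℝ)) ≤ Rα x y)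
    (hR_up : ∀ x y : G, x ≠ y → Rα x y ≤ c₂ * (wordDist S x y : ℝ) ^ (α - (N : ℝ)))
    (hR_diag : ∀ x : G, Rα x x ≤ c₂)
    (Ω : Set G) (p : ℝ) (hp : 1 ≤ p)
    (u : ℕ → G → ℝ) (v : G → ℝ)
    (hbdd : ∃ M : ℝ, ∀ n, Memlp (2 * (N : ℝ) * p / ((N : ℝ) + α)) (u n) ∧
      lpNorm (2 * (N : ℝ) * p / ((N : ℝ) + α)) (u n) ≤ M)
    (hpt : ∀ x : G, Tendsto (fun n => u n x) atTop (𝓝 (v x))) :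
    Tendsto (fun n =>
        (∑' x : Ω, conv Rα (fun y => |u n y| ^ p) (x : G) * |u n (x : G)| ^ p) -
          ∑' x : Ω, conv Rα (fun y => |u n y - v y| ^ p) (x : G) * |u n (x : G) - v (x : G)| ^ p)
      atTop (𝓝 (∑' x : Ω, conv Rα (fun y => |v y| ^ p) (x : G) * |v (x : G)| ^ p)) := by
  have hN0 : (0 : ℝ) < N := hα.trans hαN
  have hNa : 0 < (N : ℝ) - α := by linarith
  have hconj : (2 * (N : ℝ) / (N + α)).HolderConjugate (2 * (N : ℝ) / (N - α)) := by
    rw [Real.holderConjugate_iff]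
    refine ⟨?_, ?_⟩
    · rw [lt_div_iff₀ (by positivity)]; linarith
    · field_simp; ring
  obtain ⟨K, hK, hrow⟩ := row_bound Rα (wordDist S) C₂ N α c₂ hC₂.le hα hαN hc₂
    (ball_count_s6 S N C₁ C₂ hC₁ hC₂ hgrowth) hR_up hR_diag
  have hH : HLSProp Rα (2 * (N : ℝ) / (N + α)) (2 * K) :=
    hls_of_unit Rα _ _ (by positivity) hR_nonneg fun a b ha hb hsa hsb =>
      hls_unit Rα _ K hconj.lt hK hR_symm hrow a b ha hb hsa hsb
  obtain ⟨M, hM⟩ := hbdd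
  have hq : 2 * (N : ℝ) * p / (N + α) = p * (2 * (N : ℝ) / (N + α)) := by ring
  rw [hq] at hM
  have hq0 : 0 < p * (2 * (N : ℝ) / (N + α)) := by positivity
  exact brezisLieb_abstract hconj (by positivity) hH hR_nonneg hR_symm hp Ω u v
    (M ^ (p * (2 * (N : ℝ) / (N + α)))) (fun n => (hM n).1) (fun n => by
      have h := (hM n).2
      unfold lpNorm at h
      have h0 : 0 ≤ ∑' x, |u n x| ^ (p * (2 * (N : ℝ) / (N + α))) :=
        tsum_nonneg fun x => by positivity
      have h2 := Real.rpow_le_rpow (by positivity) h hq0.le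
      rwa [← Real.rpow_mul h0, one_div_mul_cancel hq0.ne', Real.rpow_one] at h2) hpt

end Choquard
end
end
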